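/- Let y ≥ 2 be a real number, let k be a positive integer, let a_1, ..., a_{2k}, A be fixed positive real numbers, and let q > 1 be an integer such that every Dirichlet L-function modulo q satisfies the Riemann Hypothesis. Let t_1, ..., t_{2k} be real numbers with |t_j| ≤ q^A. Then there is a constant B depending only on k, A and the a_j (but not on q, y or the t_j) such that ∑_{χ ∈ X_q^*} |L(1/2 + 1/log y + it_1, χ)|^{a_1} ⋯ |L(1/2 + 1/log y + it_{2k}, χ)|^{a_{2k}} ≤ φ(q) · (min{log y + 1, log q})^{B}. -/

import Mathlib

open Complex Real Finset

def dirichletRH {q : ℕ} [NeZero q] (χ : DirichletCharacter ℂ q) : Prop :=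
  ∀ s : ℂ, 0 < s.re → s.re < 1 → DirichletCharacter.LFunction χ s = 0 → s.re = 1 / 2

/-!
Under RH the quotient `L(s - h, χ) / L(s + h, χ)`, divided by the `h`-th power of the analytic
conductor, is holomorphic for `1 / 2 ≤ re s` and has modulus at most `1` on the critical line by the
functional equation, hence everywhere to its right by Phragmén–Lindelöf. Letting `h → 0` bounds
`re (-L'/L)` by half the logarithm of the conductor. Averaging over vertical translates against the
Fejér kernel replaces `-L'/L` by a finite sum over `n ≤ exp X`, and integrating this bound in `X` up
to infinity bounds `log |L(s, χ)|` by a Dirichlet polynomial of length `exp X` plus `O(log q / X)`.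

At real part `1 / 2 + 1 / log y` the prime squares contribute `O(log S)`, where
`S = min {log y + 1, log q}`, and so does the square sum of the coefficients on primes. If
`log |L(s, χ)| > V`, take `X` to be a large multiple of `log q / V`: the sum over primes must exceed
`V / 2`. Its moment of order `2r`, averaged over all characters, is by orthogonality at most the
diagonal `r! (O(log S)) ^ r` as long as `exp (r * X) ≤ q`, which allows `r` to be a small multiple
of `V`. Hence large values of height `V ≥ O(log S)` have frequency at most `exp (-l * V)` for any
prescribed `l`. Summing over `V` bounds the moments of a single `L`-value by a power of `S`, and
weighted AM–GM handles the product.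
-/

namespace DirichletMoments

open DirichletCharacter Filter MeasureTheory Topology

/-! ### Ratios of Gamma values -/

section Gamma

lemma norm_add_ofReal_sq (w : ℂ) (r : ℝ) : ‖w + r‖ ^ 2 = ‖w‖ ^ 2 + 2 * r * w.re + r ^ 2 := by
  rw [Complex.sq_norm, Complex.sq_norm, normSq_apply, normSq_apply]
  simp
  ring

lemma norm_mul_one_add_le_norm_add_ofReal {w : ℂ} (hw : 0 < w.re) (h : ℝ) :
    ‖w‖ * (1 + h * (w.re / ‖w‖ ^ 2)) ≤ ‖w + h‖ := by
  have hre : w.re ≤ ‖w‖ := re_le_norm w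
  have hn : 0 < ‖w‖ := hw.trans_le hre
  refine le_of_sq_le_sq ?_ (norm_nonneg _)
  have hsq : w.re ^ 2 / ‖w‖ ^ 2 ≤ 1 := by
    rw [div_le_one (by positivity)]
    gcongr
  calc (‖w‖ * (1 + h * (w.re / ‖w‖ ^ 2))) ^ 2
      = ‖w‖ ^ 2 + 2 * h * w.re + h ^ 2 * (w.re ^ 2 / ‖w‖ ^ 2) := by field_simp; ring
    _ ≤ ‖w‖ ^ 2 + 2 * h * w.re + h ^ 2 * 1 := by gcongr
    _ = ‖w + h‖ ^ 2 := by rw [norm_add_ofReal_sq, mul_one]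

lemma norm_add_one_le {w : ℂ} (hw : 0 < w.re) :
    ‖w + 1‖ ≤ (1 + w.re / ‖w‖ ^ 2) * (‖w‖ * Real.exp (1 / w.re ^ 2)) := by
  have hre : w.re ≤ ‖w‖ := re_le_norm w
  have hn : 0 < ‖w‖ := hw.trans_le hre
  have hexp : 1 + 1 / ‖w‖ ^ 2 ≤ Real.exp (1 / w.re ^ 2) ^ 2 :=
    calc 1 + 1 / ‖w‖ ^ 2 ≤ 1 + 1 / w.re ^ 2 := by gcongr
      _ ≤ Real.exp (1 / w.re ^ 2) := by linarith [Real.add_one_le_exp (1 / w.re ^ 2)]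
      _ ≤ Real.exp (1 / w.re ^ 2) ^ 2 := le_self_pow₀ (Real.one_le_exp (by positivity)) two_ne_zero
  refine le_of_sq_le_sq ?_ (by positivity)
  calc ‖w + 1‖ ^ 2 = ‖w‖ ^ 2 + 2 * w.re + 1 := by simpa using norm_add_ofReal_sq w 1
    _ ≤ ‖w‖ ^ 2 + 2 * w.re + 1
        + (w.re ^ 2 / ‖w‖ ^ 2 + (2 * w.re + w.re ^ 2 / ‖w‖ ^ 2) / ‖w‖ ^ 2) :=
      le_add_of_nonneg_right (by positivity)
    _ = ((1 + w.re / ‖w‖ ^ 2) * ‖w‖) ^ 2 * (1 + 1 / ‖w‖ ^ 2) := by field_simp; ring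
    _ ≤ ((1 + w.re / ‖w‖ ^ 2) * ‖w‖) ^ 2 * Real.exp (1 / w.re ^ 2) ^ 2 := by gcongr
    _ = ((1 + w.re / ‖w‖ ^ 2) * (‖w‖ * Real.exp (1 / w.re ^ 2))) ^ 2 := by ring

lemma norm_mul_rpow_le_norm_add_ofReal {w : ℂ} (hw : 0 < w.re) {h : ℝ} (h0 : 0 ≤ h) (h1 : h ≤ 1) :
    ‖w‖ * (‖w + 1‖ / (‖w‖ * Real.exp (1 / w.re ^ 2))) ^ h ≤ ‖w + h‖ := by
  have hn : 0 < ‖w‖ := hw.trans_le (re_le_norm w)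
  have hr : 0 ≤ w.re / ‖w‖ ^ 2 := by positivity
  calc ‖w‖ * (‖w + 1‖ / (‖w‖ * Real.exp (1 / w.re ^ 2))) ^ h
      ≤ ‖w‖ * (1 + w.re / ‖w‖ ^ 2) ^ h := by
        gcongr
        rw [div_le_iff₀ (by positivity)]
        exact norm_add_one_le hw
    _ ≤ ‖w‖ * (1 + h * (w.re / ‖w‖ ^ 2)) := by
        gcongr
        exact rpow_one_add_le_one_add_mul_self (by linarith) h0 h1
    _ ≤ ‖w + h‖ := norm_mul_one_add_le_norm_add_ofReal hw h

variable {z : ℂ} {h : ℝ}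

lemma prod_norm_mul_rpow_le (hz : 0 < z.re) (h0 : 0 ≤ h) (h1 : h ≤ 1) (n : ℕ) :
    (∏ j ∈ range n, ‖z + j‖) *
        (‖z + n‖ / (‖z‖ * Real.exp (∑ j ∈ range n, 1 / (z.re + j) ^ 2))) ^ h ≤
      ∏ j ∈ range n, ‖z + h + j‖ := by
  have hre (j : ℕ) : 0 < (z + j).re := by
    rw [add_re, natCast_re]
    positivity
  have hpos (j : ℕ) : 0 < ‖z + j‖ := (hre j).trans_le (re_le_norm _)
  have hz0 : 0 < ‖z‖ := by simpa using hpos 0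
  induction n with
  | zero => simp [hz0.ne']
  | succ n ih =>
    have hstep := norm_mul_rpow_le_norm_add_ofReal (hre n) h0 h1
    rw [add_right_comm z n h] at hstep
    rw [prod_range_succ, prod_range_succ, sum_range_succ, Real.exp_add]
    refine le_trans (le_of_eq ?_) (mul_le_mul ih hstep (by positivity)
      (prod_nonneg fun _ _ => norm_nonneg _))
    have hn := (hpos n).ne'
    rw [mul_mul_mul_comm, ← Real.mul_rpow (by positivity) (by positivity)]
    simp only [add_re, natCast_re]
    push_cast
    rw [← add_assoc]
    field_simp

lemma summable_one_div_add_natCast_sq {x : ℝ} (hx : 0 < x) :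
    Summable fun j : ℕ => 1 / (x + j) ^ 2 := by
  refine ((Real.summable_one_div_nat_add_rpow x 2).2 one_lt_two).congr fun j => ?_
  rw [add_comm, abs_of_nonneg (by positivity), Real.rpow_two]

lemma norm_GammaSeq_add_ofReal_le (hz : 0 < z.re) (h0 : 0 ≤ h) (h1 : h ≤ 1) {n : ℕ} (hn : 0 < n) :
    ‖Complex.GammaSeq (z + h) n‖ ≤
      (Real.exp (∑' j : ℕ, 1 / (z.re + j) ^ 2) * ‖z‖) ^ h * ‖Complex.GammaSeq z n‖ := by
  set S := ∑' j : ℕ, 1 / (z.re + j) ^ 2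
  have hn' : (0 : ℝ) < n := mod_cast hn
  have hz0 : 0 < ‖z‖ := hz.trans_le (re_le_norm z)
  set P := ∏ j ∈ range (n + 1), ‖z + j‖
  set Q := ∏ j ∈ range (n + 1), ‖z + h + j‖
  have hP : 0 < P := prod_pos fun j _ => by
    have : 0 < (z + j).re := by
      rw [add_re, natCast_re]
      positivity
    exact this.trans_le (re_le_norm _)
  have hPQ : P * (n / (‖z‖ * Real.exp S)) ^ h ≤ Q := by
    refine le_trans ?_ (prod_norm_mul_rpow_le hz h0 h1 (n + 1))
    gcongr
    · have hre := re_le_norm (z + (n + 1 : ℕ))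
      simp only [add_re, natCast_re, Nat.cast_add, Nat.cast_one, one_re] at hre ⊢
      linarith
    · exact (summable_one_div_add_natCast_sq hz).sum_le_tsum _ fun j _ => by positivity
  have : 0 < P * (n / (‖z‖ * Real.exp S)) ^ h := by positivity
  simp only [Complex.GammaSeq, norm_div, norm_mul, norm_prod, norm_natCast_cpow_of_pos hn, add_re,
    ofReal_re, Real.rpow_add hn']
  calc (n : ℝ) ^ z.re * (n : ℝ) ^ h * ‖(n.factorial : ℂ)‖ / Q
      ≤ (n : ℝ) ^ z.re * (n : ℝ) ^ h * ‖(n.factorial : ℂ)‖ /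
        (P * (n / (‖z‖ * Real.exp S)) ^ h) := by gcongr
    _ = (Real.exp S * ‖z‖) ^ h * ((n : ℝ) ^ z.re * ‖(n.factorial : ℂ)‖ / P) := by
      rw [Real.div_rpow (by positivity) (by positivity), mul_comm (Real.exp S)]
      have : (0 : ℝ) < (n : ℝ) ^ h := by positivity
      field_simp

lemma norm_Gamma_add_ofReal_le (hz : 0 < z.re) (h0 : 0 ≤ h) (h1 : h ≤ 1) :
    ‖Complex.Gamma (z + h)‖ ≤
      (Real.exp (∑' j : ℕ, 1 / (z.re + j) ^ 2) * ‖z‖) ^ h * ‖Complex.Gamma z‖ :=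
  le_of_tendsto_of_tendsto (Complex.GammaSeq_tendsto_Gamma (z + h)).norm
    ((Complex.GammaSeq_tendsto_Gamma z).norm.const_mul _)
    (eventually_atTop.2 ⟨1, fun _ hn => norm_GammaSeq_add_ofReal_le hz h0 h1 hn⟩)

/-- The constant in the Gamma ratio bound `norm_Gamma_add_ofReal_le`, made uniform over the
half-plane `1 / 8 ≤ re z`, where the Gamma factors of a Dirichlet `L`-function are evaluated. -/
noncomputable def gammaRatioConst : ℝ :=
  Real.exp (∑' j : ℕ, 1 / ((1 / 8 : ℝ) + j) ^ 2)

lemma one_le_gammaRatioConst : 1 ≤ gammaRatioConst :=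
  Real.one_le_exp (tsum_nonneg fun _ => by positivity)

lemma norm_Gammaℝ_add_le (hz : 1 / 4 ≤ z.re) (h0 : 0 ≤ h) (h1 : h ≤ 1) :
    ‖Gammaℝ (z + 2 * h)‖ ≤ (gammaRatioConst * ‖z‖) ^ h * ‖Gammaℝ z‖ := by
  have hz2 : (z / 2).re = z.re / 2 := by simp
  have hpi : ‖(π : ℂ) ^ (-(z + 2 * h) / 2)‖ ≤ ‖(π : ℂ) ^ (-z / 2)‖ := by
    rw [norm_cpow_eq_rpow_re_of_pos pi_pos, norm_cpow_eq_rpow_re_of_pos pi_pos]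
    refine Real.rpow_le_rpow_of_exponent_le (by linarith [pi_gt_three]) ?_
    have hre : (-(z + 2 * h) / 2).re = (-z / 2).re - h := by simp; ring
    linarith
  have hconst : Real.exp (∑' j : ℕ, 1 / ((z / 2).re + j) ^ 2) ≤ gammaRatioConst := by
    refine Real.exp_le_exp.2 (Summable.tsum_le_tsum (fun j => ?_)
      (summable_one_div_add_natCast_sq (by linarith))
      (summable_one_div_add_natCast_sq (by norm_num)))
    gcongr
    linarith
  have hnorm : ‖z / 2‖ ≤ ‖z‖ := by
    rw [norm_div, Complex.norm_ofNat]
    linarith [norm_nonneg z]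
  have hsplit : (z + 2 * h) / 2 = z / 2 + h := by ring
  calc ‖Gammaℝ (z + 2 * h)‖ = ‖(π : ℂ) ^ (-(z + 2 * h) / 2)‖ * ‖Complex.Gamma (z / 2 + h)‖ := by
        rw [Gammaℝ_def, norm_mul, hsplit]
    _ ≤ ‖(π : ℂ) ^ (-z / 2)‖ * ((gammaRatioConst * ‖z‖) ^ h * ‖Complex.Gamma (z / 2)‖) := by
        gcongr
        refine (norm_Gamma_add_ofReal_le (by linarith) h0 h1).trans ?_
        have hC : 0 ≤ gammaRatioConst := zero_le_one.trans one_le_gammaRatioConst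
        gcongr
    _ = (gammaRatioConst * ‖z‖) ^ h * ‖Gammaℝ z‖ := by rw [Gammaℝ_def, norm_mul]; ring

end Gamma

/-! ### The functional equation in absolute value -/

section FunctionalEquation

variable {q : ℕ}

lemma even_inv_iff {χ : DirichletCharacter ℂ q} : χ⁻¹.Even ↔ χ.Even := by
  simp [DirichletCharacter.Even, MulChar.inv_apply_eq_inv']

lemma gammaFactor_inv (χ : DirichletCharacter ℂ q) (s : ℂ) :
    gammaFactor χ⁻¹ s = gammaFactor χ s := by
  classical
  unfold gammaFactor
  exact if_congr even_inv_iff rfl rfl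

lemma Gammaℝ_conj (s : ℂ) : Gammaℝ (star s) = star (Gammaℝ s) := by
  have hGamma : Complex.Gamma (star s / 2) = star (Complex.Gamma (s / 2)) := by
    simpa [Complex.conj_ofNat] using Complex.Gamma_conj (s / 2)
  have hpi : (π : ℂ) ^ (-star s / 2) = star ((π : ℂ) ^ (-s / 2)) := by
    have harg : (π : ℂ).arg ≠ π := by
      rw [arg_ofReal_of_nonneg pi_pos.le]
      exact pi_pos.ne
    simpa [Complex.conj_ofNat] using cpow_conj (π : ℂ) (-s / 2) harg
  rw [Gammaℝ_def, Gammaℝ_def, hGamma, hpi, star_mul']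

lemma gammaFactor_conj (χ : DirichletCharacter ℂ q) (s : ℂ) :
    gammaFactor χ (star s) = star (gammaFactor χ s) := by
  simp only [gammaFactor]
  split_ifs
  · exact Gammaℝ_conj s
  · rw [← Gammaℝ_conj, star_add, star_one]

lemma gammaFactor_ne_zero (χ : DirichletCharacter ℂ q) {s : ℂ} (hs : 0 < s.re) :
    gammaFactor χ s ≠ 0 := by
  simp only [gammaFactor]
  split_ifs
  · exact Gammaℝ_ne_zero_of_re_pos hs
  · exact Gammaℝ_ne_zero_of_re_pos (by rw [add_re, one_re]; linarith)

lemma norm_le_norm_of_re_le {z w : ℂ} (h0 : 0 ≤ z.re) (hre : z.re ≤ w.re) (him : z.im = w.im) :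
    ‖z‖ ≤ ‖w‖ := by
  rw [← sq_le_sq₀ (norm_nonneg _) (norm_nonneg _), Complex.sq_norm, Complex.sq_norm, normSq_apply,
    normSq_apply, him]
  have hw : 0 ≤ w.re := h0.trans hre
  gcongr

lemma norm_gammaFactor_add_le (χ : DirichletCharacter ℂ q) {u : ℂ} (hu : 1 / 4 ≤ u.re) {h : ℝ}
    (h0 : 0 ≤ h) (h1 : h ≤ 1) :
    ‖gammaFactor χ (u + 2 * h)‖ ≤ (gammaRatioConst * ‖u + 1‖) ^ h * ‖gammaFactor χ u‖ := by
  have hC : 0 ≤ gammaRatioConst := zero_le_one.trans one_le_gammaRatioConst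
  simp only [gammaFactor]
  split_ifs
  · refine (norm_Gammaℝ_add_le hu h0 h1).trans ?_
    gcongr
    exact norm_le_norm_of_re_le (by linarith) (by simp) (by simp)
  · rw [add_right_comm]
    exact norm_Gammaℝ_add_le (by rw [add_re, one_re]; linarith) h0 h1

variable [NeZero q] {χ : DirichletCharacter ℂ q}

lemma ne_one_of_isPrimitive (hq : q ≠ 1) (hχ : χ.IsPrimitive) : χ ≠ 1 := by
  rintro rfl
  rw [isPrimitive_def, conductor_one] at hχ
  exact hq hχ.symm

lemma completedLFunction_eq_mul_gammaFactor (χ : DirichletCharacter ℂ q) {s : ℂ} (hs : 0 < s.re) :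
    completedLFunction χ s = LFunction χ s * gammaFactor χ s := by
  have hs0 : s ≠ 0 := by
    rintro rfl
    simp at hs
  rw [LFunction_eq_completed_div_gammaFactor χ s (Or.inl hs0),
    div_mul_cancel₀ _ (gammaFactor_ne_zero χ hs)]

lemma LFunction_inv_of_one_lt_re (χ : DirichletCharacter ℂ q) {s : ℂ} (hs : 1 < s.re) :
    LFunction χ⁻¹ s = star (LFunction χ (star s)) := by
  rw [LFunction_eq_LSeries _ hs, LFunction_eq_LSeries _ (by simpa using hs), LSeries, LSeries,
    tsum_star]
  congr 1 with n
  rcases eq_or_ne n 0 with rfl | hn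
  · simp
  · have hpow : (n : ℂ) ^ star s = star ((n : ℂ) ^ s) := by
      simpa using cpow_conj (n : ℂ) s (by rw [natCast_arg]; exact pi_pos.ne)
    rw [LSeries.term_of_ne_zero hn, LSeries.term_of_ne_zero hn, star_div₀, MulChar.star_apply',
      hpow, star_star]

lemma completedLFunction_inv (hχ1 : χ ≠ 1) (s : ℂ) :
    completedLFunction χ⁻¹ s = star (completedLFunction χ (star s)) := by
  have hinv : Differentiable ℂ (completedLFunction χ⁻¹) :=
    differentiable_completedLFunction (inv_ne_one.2 hχ1)
  have hconj : Differentiable ℂ fun z => star (completedLFunction χ (star z)) := fun z =>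
    (differentiableAt_conj_conj_iff (𝕜 := ℂ) (f := completedLFunction χ) (x := z)).2
      (differentiable_completedLFunction hχ1 _)
  have hnhds : {z : ℂ | 1 < z.re} ∈ 𝓝 (2 : ℂ) :=
    (isOpen_lt continuous_const continuous_re).mem_nhds (by simp)
  refine congrFun (AnalyticOnNhd.eq_of_eventuallyEq (z₀ := 2) (fun z _ => hinv.analyticAt z)
    (fun z _ => hconj.analyticAt z) ?_) s
  filter_upwards [hnhds] with z (hz : 1 < z.re)
  have hz0 : 0 < z.re := zero_lt_one.trans hz
  have hz0' : 0 < (star z).re := by simpa using hz0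
  rw [completedLFunction_eq_mul_gammaFactor _ hz0, completedLFunction_eq_mul_gammaFactor _ hz0',
    LFunction_inv_of_one_lt_re χ hz, gammaFactor_inv, gammaFactor_conj, star_mul', star_star]

lemma norm_completedLFunction_one_sub_eq_rootNumber (hχ : χ.IsPrimitive) (hχ1 : χ ≠ 1) (s : ℂ) :
    ‖completedLFunction χ (1 - s)‖ =
      (q : ℝ) ^ (s.re - 1 / 2) * ‖rootNumber χ‖ * ‖completedLFunction χ (star s)‖ := by
  have hre : (s - 1 / 2).re = s.re - 1 / 2 := by simp
  rw [hχ.completedLFunction_one_sub, norm_mul, norm_mul, completedLFunction_inv hχ1, norm_star,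
    norm_natCast_cpow_of_pos (NeZero.pos q), hre]

-- The functional equation at `2` and at `-1`, compared through `Λ(χ, 2) ≠ 0`.
lemma norm_rootNumber (hχ : χ.IsPrimitive) (hχ1 : χ ≠ 1) : ‖rootNumber χ‖ = 1 := by
  have hq : (0 : ℝ) < q := mod_cast NeZero.pos q
  have hne : ‖completedLFunction χ 2‖ ≠ 0 := by
    rw [completedLFunction_eq_mul_gammaFactor χ (by norm_num), norm_ne_zero_iff]
    exact mul_ne_zero (LFunction_ne_zero_of_one_le_re χ (Or.inl hχ1) (by norm_num))
      (gammaFactor_ne_zero χ (by norm_num))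
  have hΛ₁ : ‖completedLFunction χ (-1)‖ =
      (q : ℝ) ^ (3 / 2 : ℝ) * ‖rootNumber χ‖ * ‖completedLFunction χ 2‖ := by
    have h := norm_completedLFunction_one_sub_eq_rootNumber hχ hχ1 2
    norm_num [Complex.conj_ofNat] at h
    exact h
  have hΛ₂ : ‖completedLFunction χ 2‖ =
      (q : ℝ) ^ (-(3 / 2) : ℝ) * ‖rootNumber χ‖ * ‖completedLFunction χ (-1)‖ := by
    have h := norm_completedLFunction_one_sub_eq_rootNumber hχ hχ1 (-1)
    norm_num at h
    exact h
  have hpow : (q : ℝ) ^ (-(3 / 2) : ℝ) * (q : ℝ) ^ (3 / 2 : ℝ) = 1 := by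
    rw [← Real.rpow_add hq, neg_add_cancel, Real.rpow_zero]
  have hsq : ‖rootNumber χ‖ ^ 2 = 1 := by
    refine mul_right_cancel₀ hne ?_
    rw [hΛ₁] at hΛ₂
    linear_combination -hΛ₂ - ‖rootNumber χ‖ ^ 2 * ‖completedLFunction χ 2‖ * hpow
  exact (pow_eq_one_iff_of_nonneg (norm_nonneg _) two_ne_zero).1 hsq

lemma norm_completedLFunction_one_sub (hχ : χ.IsPrimitive) (hχ1 : χ ≠ 1) (s : ℂ) :
    ‖completedLFunction χ (1 - s)‖ =
      (q : ℝ) ^ (s.re - 1 / 2) * ‖completedLFunction χ (star s)‖ := by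
  rw [norm_completedLFunction_one_sub_eq_rootNumber hχ hχ1, norm_rootNumber hχ hχ1, mul_one]

lemma norm_LFunction_sub_le_of_re_eq_half (hχ : χ.IsPrimitive) (hχ1 : χ ≠ 1) {s : ℂ}
    (hs : s.re = 1 / 2) {h : ℝ} (h0 : 0 ≤ h) (h4 : h ≤ 1 / 4) :
    ‖LFunction χ (s - h)‖ ≤
      ‖LFunction χ (s + h)‖ * (gammaRatioConst * q * ‖s + 2‖) ^ h := by
  have hC : 0 ≤ gammaRatioConst := zero_le_one.trans one_le_gammaRatioConst
  have hsub : (s - h).re = 1 / 2 - h := by simp [hs]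
  have hadd : (s + h).re = 1 / 2 + h := by simp [hs]
  have hrefl : 1 - star (s + h) = s - h := by
    apply Complex.ext <;> simp [hs]; ring
  have hfe : ‖LFunction χ (s - h)‖ * ‖gammaFactor χ (s - h)‖ =
      (q : ℝ) ^ h * (‖LFunction χ (s + h)‖ * ‖gammaFactor χ (s + h)‖) := by
    have hΛ := norm_completedLFunction_one_sub hχ hχ1 (star (s + h))
    rw [hrefl, star_star, completedLFunction_eq_mul_gammaFactor χ (by linarith),
      completedLFunction_eq_mul_gammaFactor χ (by linarith), norm_mul, norm_mul] at hΛ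
    simpa [hs] using hΛ
  have hgamma : ‖gammaFactor χ (s + h)‖ ≤
      (gammaRatioConst * ‖s + 2‖) ^ h * ‖gammaFactor χ (s - h)‖ := by
    have hsum : s + h = s - h + 2 * h := by ring
    rw [hsum]
    refine (norm_gammaFactor_add_le χ (by linarith) h0 (by linarith)).trans ?_
    gcongr
    exact norm_le_norm_of_re_le (by simp [hs]; linarith) (by simp; linarith) (by simp)
  refine le_of_mul_le_mul_right ?_ (norm_pos_iff.2 (gammaFactor_ne_zero χ (s := s - h)
    (by linarith)))
  calc ‖LFunction χ (s - h)‖ * ‖gammaFactor χ (s - h)‖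
      ≤ (q : ℝ) ^ h * (‖LFunction χ (s + h)‖ *
          ((gammaRatioConst * ‖s + 2‖) ^ h * ‖gammaFactor χ (s - h)‖)) := by
        rw [hfe]
        gcongr
    _ = ‖LFunction χ (s + h)‖ * (gammaRatioConst * q * ‖s + 2‖) ^ h *
          ‖gammaFactor χ (s - h)‖ := by
        rw [mul_right_comm gammaRatioConst,
          Real.mul_rpow (y := q) (by positivity) (by positivity)]
        ring

end FunctionalEquation

/-! ### Holomorphic functions with bounded real part -/

section BorelCaratheodory

variable {f g : ℂ → ℂ} {c z : ℂ} {R M δ : ℝ}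

lemma exists_exp_eq_of_ball (hR : 0 < R) (hf : DifferentiableOn ℂ f (Metric.ball c R))
    (h0 : ∀ z ∈ Metric.ball c R, f z ≠ 0) :
    ∃ g : ℂ → ℂ, g c = Complex.log (f c) ∧
      (∀ z ∈ Metric.ball c R, HasDerivAt g (logDeriv f z) z) ∧
      ∀ z ∈ Metric.ball c R, Complex.exp (g z) = f z := by
  have hd : DifferentiableOn ℂ (logDeriv f) (Metric.ball c R) :=
    (hf.deriv Metric.isOpen_ball).div hf h0
  obtain ⟨g, hgc, hg⟩ := hd.isExactOn_ball.with_val_at c (Complex.log (f c))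
  have hc : c ∈ Metric.ball c R := Metric.mem_ball_self hR
  have hlog : Set.EqOn (logDeriv fun z => Complex.exp (g z)) (logDeriv f) (Metric.ball c R) :=
    fun z hz => by
      rw [logDeriv_apply, (hg z hz).cexp.deriv, mul_div_cancel_left₀ _ (Complex.exp_ne_zero _)]
  have hexp : DifferentiableOn ℂ (fun z => Complex.exp (g z)) (Metric.ball c R) := fun z hz =>
    (hg z hz).cexp.differentiableAt.differentiableWithinAt
  obtain ⟨a, -, ha⟩ := (logDeriv_eqOn_iff hexp hf Metric.isOpen_ball
    (convex_ball c R).isPreconnected h0 fun z _ => Complex.exp_ne_zero _).1 hlog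
  have ha1 : a = 1 := by
    have h : Complex.exp (g c) = (a • f) c := ha hc
    rw [hgc, Complex.exp_log (h0 c hc), Pi.smul_apply, smul_eq_mul] at h
    exact (mul_eq_right₀ (h0 c hc)).1 h.symm
  refine ⟨g, hgc, hg, fun z hz => ?_⟩
  simpa [ha1] using ha hz

lemma norm_le_of_re_le (hM : 0 < M) (hδ : 0 < δ) (hg : DifferentiableOn ℂ g (Metric.ball c R))
    (hre : ∀ z ∈ Metric.ball c R, (g z).re ≤ M) (hc : ‖g c‖ ≤ M) (hz : ‖z - c‖ ≤ R - δ) :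
    ‖g z‖ ≤ 4 * R * M / δ := by
  have hzR : ‖z - c‖ < R := by linarith
  have hR : 0 < R := (norm_nonneg _).trans_lt hzR
  have hshift : DifferentiableOn ℂ (fun w => g (w + c)) (Metric.ball 0 R) :=
    hg.comp (by fun_prop) fun w hw => by simpa using hw
  have hBC := borelCaratheodory hM hshift (fun w hw => hre _ (by simpa using hw)) hR
    (mem_ball_zero_iff.2 hzR)
  simp only [sub_add_cancel, zero_add] at hBC
  have : 0 < R - ‖z - c‖ := by linarith
  calc ‖g z‖ ≤ 2 * M * ‖z - c‖ / (R - ‖z - c‖) + ‖g c‖ * (R + ‖z - c‖) / (R - ‖z - c‖) := hBC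
    _ ≤ 2 * M * R / (R - ‖z - c‖) + M * (R + R) / (R - ‖z - c‖) := by gcongr
    _ = 4 * R * M / (R - ‖z - c‖) := by ring
    _ ≤ 4 * R * M / δ := by
      have : 0 ≤ 4 * R * M := by positivity
      gcongr
      linarith

lemma norm_deriv_le_of_re_le (hM : 0 < M) (hδ : 0 < δ)
    (hg : DifferentiableOn ℂ g (Metric.ball c R)) (hre : ∀ z ∈ Metric.ball c R, (g z).re ≤ M)
    (hc : ‖g c‖ ≤ M) (hz : ‖z - c‖ ≤ R - 2 * δ) :
    ‖deriv g z‖ ≤ 4 * R * M / δ / δ := by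
  have hnear : ∀ w, ‖w - z‖ ≤ δ → ‖w - c‖ ≤ R - δ := fun w hw => by
    linarith [norm_sub_le_norm_sub_add_norm_sub w z c]
  have hsub : Metric.closedBall z δ ⊆ Metric.ball c R := fun w hw => by
    rw [mem_closedBall_iff_norm] at hw
    rw [mem_ball_iff_norm]
    linarith [hnear w hw]
  refine norm_deriv_le_of_forall_mem_sphere_norm_le hδ (hg.diffContOnCl_ball hsub) fun w hw => ?_
  exact norm_le_of_re_le hM hδ hg hre hc (hnear w (mem_sphere_iff_norm.1 hw).le)

end BorelCaratheodory

/-! ### Growth of `L`-functions -/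

section Growth

lemma sum_range_natCast_zmod {q : ℕ} [NeZero q] {M : Type*} [AddCommMonoid M] (f : ZMod q → M) :
    ∑ i ∈ range q, f i = ∑ a, f a :=
  Finset.sum_bij' (fun i _ => (i : ZMod q)) (fun a _ => a.val) (by simp)
    (fun a _ => by simpa using a.val_lt) (fun i hi => ZMod.val_cast_of_lt (by simpa using hi))
    (by simp) (by simp)

/-- The summatory function `∑_{1 ≤ n ≤ t} χ(n)`, whose Mellin transform is essentially
`L(s, χ) / s`. -/
noncomputable def charSum {q : ℕ} (χ : DirichletCharacter ℂ q) (t : ℝ) : ℂ :=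
  ∑ n ∈ Icc 1 ⌊t⌋₊, χ n

variable {q : ℕ} {χ : DirichletCharacter ℂ q}

lemma charSum_of_lt_one (χ : DirichletCharacter ℂ q) {t : ℝ} (ht : t < 1) : charSum χ t = 0 := by
  simp [charSum, Nat.floor_eq_zero.2 ht]

lemma measurable_charSum (χ : DirichletCharacter ℂ q) : Measurable (charSum χ) := by
  have hsum : Measurable fun n : ℕ => ∑ k ∈ Icc 1 n, χ k := by fun_prop
  exact hsum.comp Nat.measurable_floor

lemma mellin_charSum_neg (χ : DirichletCharacter ℂ q) (s : ℂ) :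
    mellin (charSum χ) (-s) = ∫ t in Set.Ioi (1 : ℝ), charSum χ t * (t : ℂ) ^ (-(s + 1)) := by
  rw [mellin, ← integral_indicator measurableSet_Ioi, ← integral_indicator measurableSet_Ioi]
  refine integral_congr_ae ?_
  have hne : ∀ᵐ t : ℝ, t ≠ 1 := by simp [ae_iff]
  filter_upwards [hne] with t ht
  rcases ht.lt_or_gt with h1 | h1
  · simp [Set.indicator_apply, charSum_of_lt_one χ h1]
  · rw [Set.indicator_of_mem (Set.mem_Ioi.2 (zero_lt_one.trans h1)),
      Set.indicator_of_mem (Set.mem_Ioi.2 h1), smul_eq_mul, mul_comm]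
    congr 2
    ring

variable [NeZero q]

lemma periodic_sum_range (hχ : χ ≠ 1) : Function.Periodic (fun n : ℕ => ∑ k ∈ range n, χ k) q := by
  intro n
  have hzero : ∑ k ∈ range q, χ ((n + k : ℕ) : ZMod q) = 0 := by
    simp only [Nat.cast_add]
    rw [sum_range_natCast_zmod fun a : ZMod q => χ (n + a), ← MulChar.sum_eq_zero_of_ne_one hχ]
    exact Fintype.sum_equiv (Equiv.addLeft (n : ZMod q)) _ _ fun _ => rfl
  simp only [sum_range_add, hzero, add_zero]

lemma norm_sum_range_le (hχ : χ ≠ 1) (n : ℕ) : ‖∑ k ∈ range n, χ k‖ ≤ q := by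
  rw [← (periodic_sum_range hχ).map_mod_nat n]
  calc ‖∑ k ∈ range (n % q), χ k‖ ≤ ∑ k ∈ range (n % q), ‖χ k‖ := norm_sum_le _ _
    _ ≤ ∑ _ ∈ range (n % q), (1 : ℝ) := sum_le_sum fun _ _ => χ.norm_le_one _
    _ = ((n % q : ℕ) : ℝ) := by simp
    _ ≤ q := mod_cast (Nat.mod_lt _ (NeZero.pos q)).le

lemma norm_charSum_le (hχ : χ ≠ 1) (t : ℝ) : ‖charSum χ t‖ ≤ q + 1 := by
  have hsplit : charSum χ t = ∑ k ∈ range (⌊t⌋₊ + 1), χ k - χ 0 := by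
    rw [charSum, range_eq_Ico, sum_eq_sum_Ico_succ_bot (Nat.succ_pos _), Nat.cast_zero,
      add_sub_cancel_left]
    rfl
  rw [hsplit]
  exact (norm_sub_le _ _).trans (add_le_add (norm_sum_range_le hχ _) (χ.norm_le_one _))

lemma differentiableAt_mellin_charSum_neg (hχ : χ ≠ 1) {s : ℂ} (hs : 0 < s.re) :
    DifferentiableAt ℂ (mellin (charSum χ)) (-s) := by
  have hloc : LocallyIntegrableOn (charSum χ) (Set.Ioi 0) :=
    ((locallyIntegrable_const ((q : ℝ) + 1)).mono (measurable_charSum χ).aestronglyMeasurable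
      (ae_of_all _ fun t => (norm_charSum_le hχ t).trans (le_abs_self _))).locallyIntegrableOn _
  refine mellin_differentiableAt_of_isBigO_rpow (a := 0) (b := -s.re - 1) hloc ?_ (by simpa) ?_
    (by simp)
  · refine Asymptotics.IsBigO.of_bound (q + 1) (Eventually.of_forall fun t => ?_)
    simpa using norm_charSum_le hχ t
  · refine Asymptotics.IsBigO.of_bound 1 ?_
    filter_upwards [mem_nhdsWithin_of_mem_nhds (Iio_mem_nhds zero_lt_one)] with t ht
    rw [charSum_of_lt_one χ ht, norm_zero]
    positivity

lemma LFunction_eq_mul_mellin (hχ : χ ≠ 1) {s : ℂ} (hs : 0 < s.re) :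
    LFunction χ s = s * mellin (charSum χ) (-s) := by
  have hopen : IsOpen {z : ℂ | 0 < z.re} := isOpen_lt continuous_const continuous_re
  have hL : AnalyticOnNhd ℂ (LFunction χ) {z | 0 < z.re} := fun z _ =>
    (differentiable_LFunction hχ).analyticAt z
  have hmellin : AnalyticOnNhd ℂ (fun s => s * mellin (charSum χ) (-s)) {z : ℂ | 0 < z.re} := by
    refine DifferentiableOn.analyticOnNhd (fun z hz => ?_) hopen
    exact (differentiableAt_id.mul ((differentiableAt_mellin_charSum_neg hχ hz).comp (f := Neg.neg)
      z differentiableAt_id.neg)).differentiableWithinAt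
  have hnhds : {z : ℂ | 1 < z.re} ∈ 𝓝 (2 : ℂ) :=
    (isOpen_lt continuous_const continuous_re).mem_nhds (by simp)
  refine hL.eqOn_of_preconnected_of_eventuallyEq hmellin
    (convex_halfSpace_re_gt 0).isPreconnected (z₀ := 2) (by simp) ?_ hs
  filter_upwards [hnhds] with z (hz : 1 < z.re)
  rw [LFunction_eq_LSeries _ hz, LSeries_eq_mul_integral _ le_rfl (by linarith)
    (LSeriesSummable_of_one_lt_re χ hz), mellin_charSum_neg]
  · rfl
  · refine Asymptotics.IsBigO.of_bound (q + 1) (Eventually.of_forall fun n => ?_)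
    simpa [charSum] using norm_charSum_le hχ n

lemma norm_LFunction_le (hχ : χ ≠ 1) {s : ℂ} (hs : 1 / 4 ≤ s.re) :
    ‖LFunction χ s‖ ≤ 4 * (q + 1) * ‖s‖ := by
  rw [LFunction_eq_mul_mellin hχ (by linarith), norm_mul, mul_comm, mellin_charSum_neg]
  gcongr
  have hint : IntegrableOn (fun t : ℝ => ((q : ℝ) + 1) * t ^ (-(5 / 4) : ℝ)) (Set.Ioi 1) :=
    (integrableOn_Ioi_rpow_of_lt (by norm_num) one_pos).const_mul _
  calc ‖∫ t in Set.Ioi (1 : ℝ), charSum χ t * (t : ℂ) ^ (-(s + 1))‖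
      ≤ ∫ t in Set.Ioi (1 : ℝ), ((q : ℝ) + 1) * t ^ (-(5 / 4) : ℝ) := by
        refine norm_integral_le_of_norm_le hint ?_
        filter_upwards [self_mem_ae_restrict measurableSet_Ioi] with t (ht : 1 < t)
        have hre : (-(s + 1)).re = -(s.re + 1) := by simp [add_comm]
        rw [norm_mul, norm_cpow_eq_rpow_re_of_pos (by linarith), hre]
        gcongr
        · exact norm_charSum_le hχ t
        · exact ht.le
        · linarith
    _ = 4 * (q + 1) := by
        rw [integral_const_mul, integral_Ioi_rpow_of_lt (by norm_num) one_pos, Real.one_rpow]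
        ring

lemma norm_LFunction_sub_one_le (χ : DirichletCharacter ℂ q) {s : ℂ} (hs : 2 ≤ s.re) :
    ‖LFunction χ s - 1‖ ≤ 3 / 4 := by
  have hsum := LSeriesSummable_of_one_lt_re χ (show 1 < s.re by linarith)
  have htsum : LFunction χ s - 1 =
      ∑' n : ℕ, (LSeries.term (fun n => χ n) s n - if n = 1 then 1 else 0) := by
    rw [LFunction_eq_LSeries _ (by linarith), hsum.tsum_sub (hasSum_ite_eq 1 1).summable,
      tsum_ite_eq, LSeries]
  have hzeta : HasSum (fun n : ℕ => 1 / (n : ℝ) ^ 2 - if n = 1 then 1 else 0) (π ^ 2 / 6 - 1) :=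
    hasSum_zeta_two.sub (hasSum_ite_eq 1 1)
  have hbound : ‖LFunction χ s - 1‖ ≤ π ^ 2 / 6 - 1 := by
    rw [htsum]
    refine tsum_of_norm_bounded hzeta fun n => ?_
    rcases eq_or_ne n 0 with rfl | hn
    · simp
    rcases eq_or_ne n 1 with rfl | hn1
    · simp [LSeries.term_of_ne_zero]
    have h1 : (1 : ℝ) ≤ n := mod_cast Nat.pos_of_ne_zero hn
    rw [if_neg hn1, if_neg hn1, sub_zero, sub_zero, LSeries.term_of_ne_zero hn, norm_div,
      norm_natCast_cpow_of_pos (Nat.pos_of_ne_zero hn), ← Real.rpow_two]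
    gcongr
    exact χ.norm_le_one _
  nlinarith [pi_pos, pi_lt_d2]

lemma one_quarter_le_norm_LFunction (χ : DirichletCharacter ℂ q) {s : ℂ} (hs : 2 ≤ s.re) :
    1 / 4 ≤ ‖LFunction χ s‖ := by
  have h := norm_sub_norm_le 1 (LFunction χ s)
  rw [norm_one, norm_sub_rev] at h
  linarith [norm_LFunction_sub_one_le χ hs]

lemma norm_LFunction_le_two (χ : DirichletCharacter ℂ q) {s : ℂ} (hs : 2 ≤ s.re) :
    ‖LFunction χ s‖ ≤ 2 := by
  have h := norm_sub_norm_le (LFunction χ s) 1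
  rw [norm_one] at h
  linarith [norm_LFunction_sub_one_le χ hs]

lemma norm_log_LFunction_le (χ : DirichletCharacter ℂ q) {s : ℂ} (hs : 2 ≤ s.re) :
    ‖Complex.log (LFunction χ s)‖ ≤ 6 := by
  have hlow := one_quarter_le_norm_LFunction χ hs
  have hupp := norm_LFunction_le_two χ hs
  have hlog2 := Real.log_two_lt_d9
  have hlog4 : Real.log (1 / 4) = -(2 * Real.log 2) := by
    rw [one_div, Real.log_inv, show (4 : ℝ) = 2 ^ 2 by norm_num, Real.log_pow, Nat.cast_ofNat]
  have hre : |(Complex.log (LFunction χ s)).re| ≤ 2 := by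
    rw [log_re, abs_le]
    constructor
    · linarith [Real.log_le_log (by norm_num) hlow]
    · linarith [Real.log_le_log (by linarith) hupp]
  have him : |(Complex.log (LFunction χ s)).im| ≤ 4 :=
    log_im _ ▸ (abs_arg_le_pi _).trans pi_le_four
  exact (norm_le_abs_re_add_abs_im _).trans (by linarith)

end Growth

/-! ### Consequences of the Riemann Hypothesis to the right of the critical line -/

section RiemannHypothesis

variable {q : ℕ} [NeZero q] {χ : DirichletCharacter ℂ q}

lemma LFunction_ne_zero_of_half_lt_re (hRH : dirichletRH χ) (hχ : χ ≠ 1) {s : ℂ}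
    (hs : 1 / 2 < s.re) : LFunction χ s ≠ 0 := by
  intro h0
  rcases lt_or_ge s.re 1 with h1 | h1
  · exact hs.ne' (hRH s (by linarith) h1 h0)
  · exact LFunction_ne_zero_of_one_le_re χ (Or.inl hχ) h1 h0

lemma isOpen_half_lt_re : IsOpen {z : ℂ | 1 / 2 < z.re} :=
  isOpen_lt continuous_const continuous_re

lemma differentiableOn_logDeriv_LFunction (hRH : dirichletRH χ) (hχ : χ ≠ 1) :
    DifferentiableOn ℂ (logDeriv (LFunction χ)) {z | 1 / 2 < z.re} :=
  ((differentiable_LFunction hχ).differentiableOn.deriv isOpen_half_lt_re).div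
    (differentiable_LFunction hχ).differentiableOn fun _ hz =>
      LFunction_ne_zero_of_half_lt_re hRH hχ hz

lemma re_sub_norm_le_re (z c : ℂ) : c.re - ‖z - c‖ ≤ z.re := by
  have h := neg_le_of_abs_le (abs_re_le_norm (z - c))
  rw [sub_re] at h
  linarith

lemma exists_log_LFunction (hRH : dirichletRH χ) (hχ : χ ≠ 1) {c : ℂ} (hc : 3 ≤ c.re) :
    ∃ g : ℂ → ℂ, ‖g c‖ ≤ 6 ∧
      (∀ z ∈ Metric.ball c (5 / 2), HasDerivAt g (logDeriv (LFunction χ) z) z) ∧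
      ∀ z ∈ Metric.ball c (5 / 2), Complex.exp (g z) = LFunction χ z := by
  obtain ⟨g, hgc, hg⟩ := exists_exp_eq_of_ball (f := LFunction χ) (c := c) (R := 5 / 2)
    (by norm_num) (differentiable_LFunction hχ).differentiableOn fun z hz =>
      LFunction_ne_zero_of_half_lt_re hRH hχ (by
        linarith [re_sub_norm_le_re z c, mem_ball_iff_norm.1 hz])
  exact ⟨g, hgc ▸ norm_log_LFunction_le χ (by linarith), hg⟩

lemma re_le_of_exp_eq_LFunction (hχ : χ ≠ 1) {w z : ℂ} (hw : Complex.exp w = LFunction χ z)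
    (hz : 1 / 4 ≤ z.re) {T : ℝ} (hT : 1 ≤ T) (hzT : ‖z‖ ≤ 7 * T) :
    w.re ≤ 6 * (28 * (q + 1)) ^ (1 / 2 : ℝ) * T ^ (1 / 2 : ℝ) := by
  have hexp : Real.exp w.re ≤ 28 * (q + 1) * T := by
    rw [← Complex.norm_exp, hw]
    refine (norm_LFunction_le hχ hz).trans ?_
    calc 4 * (q + 1) * ‖z‖ ≤ 4 * (q + 1) * (7 * T) := by gcongr
      _ = 28 * (q + 1) * T := by ring
  calc w.re ≤ Real.log (28 * (q + 1) * T) := (Real.le_log_iff_exp_le (by positivity)).2 hexp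
    _ ≤ (28 * (q + 1) * T) ^ (1 / 2 : ℝ) / (1 / 2) :=
      Real.log_le_rpow_div (by positivity) (by norm_num)
    _ = 2 * ((28 * (q + 1)) ^ (1 / 2 : ℝ) * T ^ (1 / 2 : ℝ)) := by
      rw [Real.mul_rpow (by positivity) (by positivity)]
      ring
    _ ≤ 6 * (28 * (q + 1)) ^ (1 / 2 : ℝ) * T ^ (1 / 2 : ℝ) := by
      rw [mul_assoc]
      gcongr
      norm_num

lemma exists_log_LFunction_le (hRH : dirichletRH χ) (hχ : χ ≠ 1) {ε : ℝ} (hε : 0 < ε) (hε1 : ε ≤ 1)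
    {s : ℂ} (hs : 1 / 2 + 2 * ε ≤ s.re) :
    ∃ w : ℂ, Complex.exp w = LFunction χ s ∧
      ‖w‖ ≤ 10 * (6 * (28 * (q + 1)) ^ (1 / 2 : ℝ) * (‖s‖ + 1) ^ (1 / 2 : ℝ)) / ε ∧
      ‖logDeriv (LFunction χ) s‖ ≤
        10 * (6 * (28 * (q + 1)) ^ (1 / 2 : ℝ) * (‖s‖ + 1) ^ (1 / 2 : ℝ)) / ε / ε := by
  set M : ℝ := 6 * (28 * (q + 1)) ^ (1 / 2 : ℝ) * (‖s‖ + 1) ^ (1 / 2 : ℝ)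
  have hM6 : 6 ≤ M := by
    have h1 : (1 : ℝ) ≤ (28 * (q + 1)) ^ (1 / 2 : ℝ) :=
      Real.one_le_rpow (by linarith [q.cast_nonneg (α := ℝ)]) (by norm_num)
    have h2 : 1 ≤ (‖s‖ + 1) ^ (1 / 2 : ℝ) :=
      Real.one_le_rpow (by linarith [norm_nonneg s]) (by norm_num)
    nlinarith
  set c : ℂ := s + ((max s.re 3 - s.re : ℝ) : ℂ) with hc
  have hcre : c.re = max s.re 3 := by simp [hc]
  have hsc : ‖s - c‖ = max s.re 3 - s.re := by
    rw [hc, sub_add_cancel_left, norm_neg, norm_real, Real.norm_of_nonneg]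
    exact sub_nonneg.2 (le_max_left _ _)
  have hsc_le : ‖s - c‖ ≤ 5 / 2 - 2 * ε := by
    rw [hsc, sub_le_iff_le_add]
    exact max_le (by linarith) (by linarith)
  have hmem : s ∈ Metric.ball c (5 / 2) := mem_ball_iff_norm.2 (by linarith)
  have hball : ∀ z ∈ Metric.ball c (5 / 2), 1 / 4 ≤ z.re ∧ ‖z‖ ≤ 7 * (‖s‖ + 1) := fun z hz => by
    rw [mem_ball_iff_norm] at hz
    constructor
    · linarith [re_sub_norm_le_re z c, hcre ▸ le_max_right s.re 3]
    · have h1 := norm_le_norm_add_norm_sub' z c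
      have h2 := norm_le_norm_add_norm_sub s c
      linarith [norm_nonneg s]
  obtain ⟨g, hgc, hg, hexp⟩ := exists_log_LFunction hRH hχ (hcre ▸ le_max_right s.re 3)
  have hgd : DifferentiableOn ℂ g (Metric.ball c (5 / 2)) := fun z hz =>
    (hg z hz).differentiableAt.differentiableWithinAt
  have hre : ∀ z ∈ Metric.ball c (5 / 2), (g z).re ≤ M := fun z hz =>
    re_le_of_exp_eq_LFunction hχ (hexp z hz) (hball z hz).1 (by linarith [norm_nonneg s])
      (hball z hz).2
  have hten : 10 * M = 4 * (5 / 2) * M := by ring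
  refine ⟨g s, hexp s hmem, ?_, ?_⟩
  · rw [hten]
    exact norm_le_of_re_le (by linarith) hε hgd hre (hgc.trans hM6) (by linarith)
  · rw [hten, ← (hg s hmem).deriv]
    exact norm_deriv_le_of_re_le (by linarith) hε hgd hre (hgc.trans hM6) hsc_le

lemma exists_norm_logDeriv_LFunction_le (hRH : dirichletRH χ) (hχ : χ ≠ 1) {ε : ℝ} (hε : 0 < ε) :
    ∃ K : ℝ, 0 ≤ K ∧ ∀ s : ℂ, 1 / 2 + ε ≤ s.re →
      ‖(LFunction χ s)⁻¹‖ ≤ Real.exp (K * (‖s‖ + 1) ^ (1 / 2 : ℝ)) ∧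
      ‖logDeriv (LFunction χ) s‖ ≤ K * (‖s‖ + 1) ^ (1 / 2 : ℝ) := by
  set δ : ℝ := min (ε / 2) 1
  have hδ0 : 0 < δ := lt_min (by linarith) one_pos
  have hδ1 : δ ≤ 1 := min_le_right _ _
  refine ⟨10 * (6 * (28 * (q + 1)) ^ (1 / 2 : ℝ)) / δ / δ, by positivity, fun s hs => ?_⟩
  obtain ⟨w, hw, hwn, hder⟩ := exists_log_LFunction_le hRH hχ hδ0 hδ1 (s := s)
    (by linarith [min_le_left (ε / 2) 1])
  have hassoc : 10 * (6 * (28 * (q + 1)) ^ (1 / 2 : ℝ) * (‖s‖ + 1) ^ (1 / 2 : ℝ)) / δ / δ =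
      10 * (6 * (28 * (q + 1)) ^ (1 / 2 : ℝ)) / δ / δ * (‖s‖ + 1) ^ (1 / 2 : ℝ) := by ring
  rw [← hassoc]
  refine ⟨?_, hder⟩
  rw [← hw, ← Complex.exp_neg, Complex.norm_exp, Real.exp_le_exp]
  calc (-w).re ≤ ‖w‖ := (re_le_norm _).trans_eq (norm_neg w)
    _ ≤ 10 * (6 * (28 * (q + 1)) ^ (1 / 2 : ℝ) * (‖s‖ + 1) ^ (1 / 2 : ℝ)) / δ := hwn
    _ ≤ 10 * (6 * (28 * (q + 1)) ^ (1 / 2 : ℝ) * (‖s‖ + 1) ^ (1 / 2 : ℝ)) / δ / δ :=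
      le_div_self (by positivity) hδ0 hδ1

end RiemannHypothesis

/-! ### The logarithmic derivative under the Riemann Hypothesis -/

section LogDeriv

variable {q : ℕ} [NeZero q] {χ : DirichletCharacter ℂ q} {h : ℝ} {s : ℂ}

lemma one_le_gammaRatioConst_mul_natCast (q : ℕ) [NeZero q] : 1 ≤ gammaRatioConst * q :=
  one_le_mul_of_one_le_of_one_le one_le_gammaRatioConst (mod_cast NeZero.one_le)

lemma re_add_two_le_mul_norm (q : ℕ) [NeZero q] (s : ℂ) :
    s.re + 2 ≤ gammaRatioConst * q * ‖s + 2‖ := by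
  calc s.re + 2 = (s + 2).re := by simp
    _ ≤ 1 * ‖s + 2‖ := (re_le_norm _).trans_eq (one_mul _).symm
    _ ≤ gammaRatioConst * q * ‖s + 2‖ := by
      gcongr
      exact one_le_gammaRatioConst_mul_natCast q

/-- The quotient `L(s - h, χ) / L(s + h, χ)`, divided by a branch of the `h`-th power of the
analytic conductor. The functional equation bounds it by `1` on the critical line. -/
noncomputable def shiftQuotient {q : ℕ} [NeZero q] (χ : DirichletCharacter ℂ q) (h : ℝ) (s : ℂ) :
    ℂ :=
  LFunction χ (s - h) / LFunction χ (s + h) *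
    (((gammaRatioConst * q : ℝ) : ℂ) * (s + 2)) ^ (-h : ℂ)

lemma norm_shiftQuotient (χ : DirichletCharacter ℂ q) (h : ℝ) (s : ℂ) :
    ‖shiftQuotient χ h s‖ =
      ‖LFunction χ (s - h)‖ * ‖(LFunction χ (s + h))⁻¹‖ *
        (gammaRatioConst * q * ‖s + 2‖) ^ (-h) := by
  have hQ := one_le_gammaRatioConst_mul_natCast q
  rw [shiftQuotient, norm_mul, div_eq_mul_inv, norm_mul, ← ofReal_neg, norm_cpow_real, norm_mul,
    norm_real, Real.norm_of_nonneg (by linarith)]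

lemma norm_shiftQuotient_le (χ : DirichletCharacter ℂ q) (hs : 0 ≤ s.re) (h0 : 0 ≤ h) :
    ‖shiftQuotient χ h s‖ ≤ ‖LFunction χ (s - h)‖ * ‖(LFunction χ (s + h))⁻¹‖ := by
  rw [norm_shiftQuotient]
  refine mul_le_of_le_one_right (by positivity) (Real.rpow_le_one_of_one_le_of_nonpos ?_ ?_)
  · linarith [re_add_two_le_mul_norm q s]
  · linarith

lemma norm_shiftQuotient_le_one_of_re_eq_half (hχ : χ.IsPrimitive) (hχ1 : χ ≠ 1)
    (hRH : dirichletRH χ) (h0 : 0 < h) (h4 : h ≤ 1 / 4) (hs : s.re = 1 / 2) :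
    ‖shiftQuotient χ h s‖ ≤ 1 := by
  have hX : 0 < gammaRatioConst * q * ‖s + 2‖ := by linarith [re_add_two_le_mul_norm q s]
  have hne : LFunction χ (s + h) ≠ 0 :=
    LFunction_ne_zero_of_half_lt_re hRH hχ1 (by simpa [hs] using h0)
  rw [norm_shiftQuotient, norm_inv, Real.rpow_neg hX.le, ← div_eq_mul_inv, ← div_eq_mul_inv,
    div_div]
  exact div_le_one_of_le₀ (norm_LFunction_sub_le_of_re_eq_half hχ hχ1 hs h0.le h4) (by positivity)

lemma norm_shiftQuotient_le_eight (χ : DirichletCharacter ℂ q) (h0 : 0 ≤ h) (h4 : h ≤ 1 / 4)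
    (hs : 3 ≤ s.re) : ‖shiftQuotient χ h s‖ ≤ 8 := by
  refine (norm_shiftQuotient_le χ (by linarith) h0).trans ?_
  have hupp := norm_LFunction_le_two χ (s := s - h) (by simp; linarith)
  have hlow := one_quarter_le_norm_LFunction χ (s := s + h) (by simp; linarith)
  calc ‖LFunction χ (s - h)‖ * ‖(LFunction χ (s + h))⁻¹‖ ≤ 2 * (1 / 4)⁻¹ := by
        rw [norm_inv]
        gcongr
    _ = 8 := by norm_num

lemma differentiableAt_shiftQuotient (hRH : dirichletRH χ) (hχ : χ ≠ 1) (h0 : 0 < h)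
    (hs : 1 / 2 ≤ s.re) : DifferentiableAt ℂ (shiftQuotient χ h) s := by
  have hne : LFunction χ (s + h) ≠ 0 :=
    LFunction_ne_zero_of_half_lt_re hRH hχ (by simp; linarith)
  have hL := differentiable_LFunction hχ
  have hslit : ((gammaRatioConst * q : ℝ) : ℂ) * (s + 2) ∈ slitPlane := by
    left
    rw [re_ofReal_mul, add_re, re_ofNat]
    exact mul_pos (by linarith [one_le_gammaRatioConst_mul_natCast q]) (by linarith)
  refine .mul (.div ?_ ?_ hne) (.cpow_const (by fun_prop) hslit)
  · exact (hL _).comp s (by fun_prop)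
  · exact (hL _).comp s (by fun_prop)

lemma exists_norm_shiftQuotient_le_exp (hRH : dirichletRH χ) (hχ : χ ≠ 1) (h0 : 0 < h)
    (h4 : h ≤ 1 / 4) :
    ∃ K : ℝ, 0 ≤ K ∧ ∀ s : ℂ, 1 / 2 ≤ s.re →
      ‖shiftQuotient χ h s‖ ≤ Real.exp (K * (‖s‖ + 2)) := by
  obtain ⟨K, hK0, hK⟩ := exists_norm_logDeriv_LFunction_le hRH hχ h0
  refine ⟨4 * (q + 1) + K, by positivity, fun s hs =>
    (norm_shiftQuotient_le χ (by linarith) h0.le).trans ?_⟩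
  have hh : ‖(h : ℂ)‖ ≤ 1 := by
    rw [norm_real, Real.norm_of_nonneg h0.le]
    linarith
  have hnum : ‖LFunction χ (s - h)‖ ≤ Real.exp (4 * (q + 1) * (‖s‖ + 2)) := by
    calc ‖LFunction χ (s - h)‖ ≤ 4 * (q + 1) * ‖s - h‖ :=
          norm_LFunction_le hχ (by simp; linarith)
      _ ≤ 4 * (q + 1) * (‖s‖ + 2) := by
          gcongr
          linarith [norm_sub_le s h]
      _ ≤ Real.exp (4 * (q + 1) * (‖s‖ + 2)) := by
          linarith [Real.add_one_le_exp (4 * (q + 1) * (‖s‖ + 2))]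
  have hden : ‖(LFunction χ (s + h))⁻¹‖ ≤ Real.exp (K * (‖s‖ + 2)) := by
    refine (hK (s + h) (by simp; linarith)).1.trans ?_
    have hroot : (‖s + h‖ + 1) ^ (1 / 2 : ℝ) ≤ ‖s‖ + 2 :=
      calc (‖s + h‖ + 1) ^ (1 / 2 : ℝ) ≤ ‖s + h‖ + 1 :=
            Real.rpow_le_self_of_one_le (by linarith [norm_nonneg (s + h)]) (by norm_num)
        _ ≤ ‖s‖ + 2 := by linarith [norm_add_le s h]
    gcongr
  calc ‖LFunction χ (s - h)‖ * ‖(LFunction χ (s + h))⁻¹‖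
      ≤ Real.exp (4 * (q + 1) * (‖s‖ + 2)) * Real.exp (K * (‖s‖ + 2)) := by gcongr
    _ = Real.exp ((4 * (q + 1) + K) * (‖s‖ + 2)) := by rw [← Real.exp_add, add_mul]

lemma norm_shiftQuotient_le_one (hχ : χ.IsPrimitive) (hχ1 : χ ≠ 1) (hRH : dirichletRH χ)
    (h0 : 0 < h) (h4 : h ≤ 1 / 4) (hs : 1 / 2 ≤ s.re) : ‖shiftQuotient χ h s‖ ≤ 1 := by
  obtain ⟨K, hK0, hK⟩ := exists_norm_shiftQuotient_le_exp hRH hχ1 h0 h4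
  have hPL : ‖shiftQuotient χ h (s - 1 / 2 + 1 / 2)‖ ≤ 1 := by
    refine PhragmenLindelof.right_half_plane_of_bounded_on_real (C := 1)
      (f := fun z => shiftQuotient χ h (z + 1 / 2)) ?_ ⟨1, one_lt_two, K, ?_⟩ ?_ ?_
      (by simpa using hs)
    · apply DifferentiableOn.diffContOnCl
      rw [closure_setOfPred_lt_re]
      intro z (hz : 0 ≤ z.re)
      exact ((differentiableAt_shiftQuotient hRH hχ1 h0 (by simpa using hz)).comp z
        (by fun_prop)).differentiableWithinAt
    · refine Asymptotics.IsBigO.of_bound (Real.exp (K * 3)) ?_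
      have hre : ∀ᶠ z in Bornology.cobounded ℂ ⊓ 𝓟 {z : ℂ | 0 < z.re}, 0 < z.re :=
        eventually_inf_principal.2 (Eventually.of_forall fun z hz => hz)
      filter_upwards [hre] with z hz
      refine (hK (z + 1 / 2) (by simpa using hz.le)).trans ?_
      have hz1 : ‖z + 1 / 2‖ ≤ ‖z‖ + 1 := (norm_add_le _ _).trans (by norm_num)
      rw [Real.norm_of_nonneg (Real.exp_pos _).le, ← Real.exp_add, Real.rpow_one, ← mul_add,
        Real.exp_le_exp]
      exact mul_le_mul_of_nonneg_left (by linarith) hK0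
    · refine isBoundedUnder_of_eventually_le (a := 8) ?_
      filter_upwards [eventually_ge_atTop 3] with x hx
      exact norm_shiftQuotient_le_eight χ h0.le h4 (by simp; linarith)
    · exact fun x => norm_shiftQuotient_le_one_of_re_eq_half hχ hχ1 hRH h0 h4 (by simp)
  rwa [sub_add_cancel] at hPL

lemma re_deriv_nonpos_of_norm_le_one {F : ℝ → ℂ} {F' : ℂ} (hF : HasDerivAt F F' 0) (hF0 : F 0 = 1)
    (hle : ∀ᶠ h in 𝓝[>] (0 : ℝ), ‖F h‖ ≤ 1) : F'.re ≤ 0 := by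
  refine le_of_tendsto ((continuous_re.tendsto F').comp hF.tendsto_slope_zero_right) ?_
  filter_upwards [hle, self_mem_nhdsWithin] with h hh (h0 : 0 < h)
  rw [Function.comp_apply, zero_add, hF0, smul_re, sub_re, one_re]
  exact smul_nonpos_of_nonneg_of_nonpos (inv_nonneg.2 h0.le)
    (sub_nonpos.2 ((re_le_norm _).trans hh))

lemma hasDerivAt_shiftQuotient_zero (hχ : χ ≠ 1) (hs : 0 < s.re) (hne : LFunction χ s ≠ 0) :
    HasDerivAt (fun h : ℝ => shiftQuotient χ h s)
      (-2 * logDeriv (LFunction χ) s -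
        Complex.log (((gammaRatioConst * q : ℝ) : ℂ) * (s + 2))) 0 := by
  have hL : HasDerivAt (LFunction χ) (deriv (LFunction χ) s) s :=
    (differentiable_LFunction hχ s).hasDerivAt
  have hbase : ((gammaRatioConst * q : ℝ) : ℂ) * (s + 2) ≠ 0 := by
    rw [← norm_pos_iff, norm_mul, norm_real]
    refine lt_of_lt_of_le ?_ (mul_le_mul_of_nonneg_right (le_abs_self _) (norm_nonneg _))
    linarith [re_add_two_le_mul_norm q s]
  have hsub : HasDerivAt (fun h : ℂ => LFunction χ (s - h)) (-deriv (LFunction χ) s) (0 : ℝ) := by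
    rw [ofReal_zero]
    exact HasDerivAt.comp_const_sub s 0 (by simpa using hL)
  have hadd : HasDerivAt (fun h : ℂ => LFunction χ (s + h)) (deriv (LFunction χ) s) (0 : ℝ) := by
    rw [ofReal_zero]
    exact HasDerivAt.comp_const_add s 0 (by simpa using hL)
  have hpow : HasDerivAt (fun h : ℂ => (((gammaRatioConst * q : ℝ) : ℂ) * (s + 2)) ^ (-h))
      (-Complex.log (((gammaRatioConst * q : ℝ) : ℂ) * (s + 2))) (0 : ℝ) := by
    simpa using (hasDerivAt_neg ((0 : ℝ) : ℂ)).const_cpow (Or.inl hbase)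
  have hquot := ((hsub.div hadd (by simpa using hne)).mul hpow).comp_ofReal
  refine hquot.congr_deriv ?_
  simp only [logDeriv_apply, Pi.div_apply, ofReal_zero, add_zero, sub_zero, neg_zero, cpow_zero]
  field_simp
  ring

theorem neg_re_logDeriv_LFunction_le (hχ : χ.IsPrimitive) (hχ1 : χ ≠ 1) (hRH : dirichletRH χ)
    (hs : 1 / 2 < s.re) :
    -(logDeriv (LFunction χ) s).re ≤ 1 / 2 * Real.log (gammaRatioConst * q * ‖s + 2‖) := by
  have hne := LFunction_ne_zero_of_half_lt_re hRH hχ1 hs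
  have hle : ∀ᶠ h in 𝓝[>] (0 : ℝ), ‖shiftQuotient χ h s‖ ≤ 1 := by
    filter_upwards [Ioc_mem_nhdsGT (show (0 : ℝ) < 1 / 4 by norm_num)] with h hh
    exact norm_shiftQuotient_le_one hχ hχ1 hRH hh.1 hh.2 hs.le
  have hre := re_deriv_nonpos_of_norm_le_one
    (hasDerivAt_shiftQuotient_zero hχ1 (by linarith) hne)
    (by simp [shiftQuotient, div_self hne]) hle
  have hQ := one_le_gammaRatioConst_mul_natCast q
  have htwo : (2 * logDeriv (LFunction χ) s).re = 2 * (logDeriv (LFunction χ) s).re := by simp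
  rw [sub_re, neg_mul, neg_re, htwo, log_re, norm_mul, norm_real,
    Real.norm_of_nonneg (by linarith)] at hre
  linarith

end LogDeriv

/-! ### The Fejér kernel -/

section Fejer

/-- The Fejér kernel on the real line, which is the Fourier transform of `tent`. -/
noncomputable def fejer (w : ℝ) : ℝ := Real.sinc (π * w) ^ 2

/-- The triangular weight supported on `[-1, 1]`. -/
noncomputable def tent (x : ℝ) : ℝ := max 0 (1 - |x|)

lemma continuous_fejer : Continuous fejer := by
  have := Real.continuous_sinc
  unfold fejer
  fun_prop

lemma continuous_tent : Continuous tent := by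
  unfold tent
  fun_prop

lemma fejer_nonneg (w : ℝ) : 0 ≤ fejer w := sq_nonneg _

lemma fejer_le_one (w : ℝ) : fejer w ≤ 1 := (sq_le_one_iff_abs_le_one _).2 (abs_sinc_le_one _)

lemma fejer_le (w : ℝ) : fejer w ≤ 4 * (1 + |w|) ^ (-2 : ℝ) := by
  rw [Real.rpow_neg (by positivity), ← div_eq_mul_inv, le_div_iff₀ (by positivity), Real.rpow_two]
  rcases le_or_gt |w| 1 with hw | hw
  · calc fejer w * (1 + |w|) ^ 2 ≤ 1 * (1 + 1) ^ 2 := by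
          gcongr
          exact fejer_le_one w
      _ = 4 := by norm_num
  · have hw0 : w ≠ 0 := abs_pos.1 (by linarith)
    have hsin : fejer w * |w| ^ 2 = Real.sin (π * w) ^ 2 / π ^ 2 := by
      rw [fejer, Real.sinc_of_ne_zero (by positivity), sq_abs]
      field_simp
    calc fejer w * (1 + |w|) ^ 2 ≤ fejer w * (|w| + |w|) ^ 2 := by
          gcongr
          exact fejer_nonneg w
      _ = 4 * (Real.sin (π * w) ^ 2 / π ^ 2) := by rw [← hsin]; ring
      _ ≤ 4 * 1 := by
          gcongr
          rw [div_le_one (by positivity)]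
          nlinarith [Real.sin_sq_le_one (π * w), pi_gt_three]
      _ = 4 := mul_one 4

lemma integrable_four_mul_one_add_abs_rpow :
    Integrable fun w : ℝ => 4 * (1 + |w|) ^ (-2 : ℝ) :=
  (integrable_one_add_norm (E := ℝ) (r := 2) (by simp)).const_mul 4

lemma integrable_fejer : Integrable fejer :=
  integrable_four_mul_one_add_abs_rpow.mono' continuous_fejer.aestronglyMeasurable
    (ae_of_all _ fun w => by
      rw [Real.norm_of_nonneg (fejer_nonneg w)]
      exact fejer_le w)

lemma tent_neg (x : ℝ) : tent (-x) = tent x := by rw [tent, tent, abs_neg]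

lemma tent_of_mem_Icc {x : ℝ} (hx : x ∈ Set.Icc 0 1) : tent x = 1 - x := by
  rw [tent, abs_of_nonneg hx.1, max_eq_right (sub_nonneg.2 hx.2)]

lemma tent_of_notMem_Icc {x : ℝ} (hx : x ∉ Set.Icc (-1) 1) : tent x = 0 := by
  rw [Set.mem_Icc, ← abs_le, not_le] at hx
  exact max_eq_left (by linarith)

lemma integrable_tent : Integrable fun x => (tent x : ℂ) :=
  (continuous_ofReal.comp continuous_tent).integrable_of_hasCompactSupport <|
    HasCompactSupport.intro (isCompact_Icc (a := -1) (b := 1)) fun x hx => by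
      simp [tent_of_notMem_Icc hx]

lemma integral_one_sub_mul_cos (w : ℝ) :
    ∫ v in (0 : ℝ)..1, 2 * (1 - v) * Real.cos (2 * π * v * w) = fejer w := by
  rcases eq_or_ne w 0 with rfl | hw
  · simp only [mul_zero, Real.cos_zero, mul_one, fejer, Real.sinc_zero,
      intervalIntegral.integral_const_mul,
      intervalIntegral.integral_sub intervalIntegrable_const intervalIntegral.intervalIntegrable_id,
      intervalIntegral.integral_const, integral_id]
    norm_num
  have hderiv : ∀ v ∈ Set.uIcc (0 : ℝ) 1, HasDerivAt
      (fun v : ℝ => 2 * (1 - v) * (Real.sin (2 * π * v * w) / (2 * π * w))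
        - 2 * (Real.cos (2 * π * v * w) / (2 * π * w) ^ 2))
      (2 * (1 - v) * Real.cos (2 * π * v * w)) v := fun v _ => by
    have hlin : HasDerivAt (fun v : ℝ => 2 * π * v * w) (2 * π * w) v := by
      simpa using ((hasDerivAt_id v).const_mul (2 * π)).mul_const w
    have hcoef : HasDerivAt (fun v : ℝ => 2 * (1 - v)) (-2) v := by
      simpa using ((hasDerivAt_id v).const_sub 1).const_mul 2
    refine ((hcoef.mul (hlin.sin.div_const (2 * π * w))).sub
      ((hlin.cos.div_const ((2 * π * w) ^ 2)).const_mul 2)).congr_deriv ?_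
    field_simp
    ring
  rw [intervalIntegral.integral_eq_sub_of_hasDerivAt hderiv
    (Continuous.intervalIntegrable (by fun_prop) _ _), fejer,
    Real.sinc_of_ne_zero (by positivity), div_pow, Real.sin_sq_eq_half_sub]
  simp only [sub_self, mul_zero, zero_mul, sub_zero, mul_one, Real.cos_zero, Real.sin_zero,
    zero_div, ← mul_assoc]
  field_simp
  ring

lemma fourier_tent (w : ℝ) :
    FourierTransform.fourier (fun x : ℝ => (tent x : ℂ)) w = (fejer w : ℂ) := by
  set F : ℝ → ℂ := fun v => Complex.exp (↑(-2 * π * v * w) * I) * tent v with hF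
  have hFc : Continuous F := by
    have := continuous_tent
    fun_prop
  have hsupp : ∀ v, v ∉ Set.Icc (-1 : ℝ) 1 → F v = 0 := fun v hv => by
    simp [hF, tent_of_notMem_Icc hv]
  have hfold : ∫ v in (-1 : ℝ)..0, F v = ∫ v in (0 : ℝ)..1, F (-v) := by
    rw [intervalIntegral.integral_comp_neg, neg_zero]
  have hsum : ∀ v ∈ Set.uIcc (0 : ℝ) 1,
      F (-v) + F v = ((2 * (1 - v) * Real.cos (2 * π * v * w) : ℝ) : ℂ) := fun v hv => by
    rw [Set.uIcc_of_le zero_le_one] at hv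
    have harg : ((-2 * π * -v * w : ℝ) : ℂ) * I = ((2 * π * v * w : ℝ) : ℂ) * I ∧
        ((-2 * π * v * w : ℝ) : ℂ) * I = -((2 * π * v * w : ℝ) : ℂ) * I := by
      push_cast
      constructor <;> ring
    simp only [hF, harg, tent_neg, tent_of_mem_Icc hv, ofReal_mul (2 * (1 - v)), ofReal_cos,
      Complex.cos]
    push_cast
    ring
  calc FourierTransform.fourier (fun x : ℝ => (tent x : ℂ)) w = ∫ v, F v := by
        rw [Real.fourier_real_eq_integral_exp_smul]
        rfl
    _ = ∫ v in (-1 : ℝ)..1, F v := by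
        rw [intervalIntegral.integral_of_le (by norm_num), ← integral_Icc_eq_integral_Ioc,
          setIntegral_eq_integral_of_forall_compl_eq_zero hsupp]
    _ = ∫ v in (0 : ℝ)..1, (F (-v) + F v) := by
        rw [← intervalIntegral.integral_add_adjacent_intervals (hFc.intervalIntegrable _ 0)
          (hFc.intervalIntegrable _ _), hfold, ← intervalIntegral.integral_add
          (Continuous.intervalIntegrable (by fun_prop) _ _) (hFc.intervalIntegrable _ _)]
    _ = (fejer w : ℂ) := by
        rw [intervalIntegral.integral_congr hsum, intervalIntegral.integral_ofReal,
          integral_one_sub_mul_cos]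

lemma integral_exp_mul_fejer (x : ℝ) :
    ∫ w : ℝ, Complex.exp (↑(2 * π * (w * x)) * I) * (fejer w : ℂ) = (tent x : ℂ) := by
  have hfourier : FourierTransform.fourier (fun x : ℝ => (tent x : ℂ)) = fun w => (fejer w : ℂ) :=
    funext fourier_tent
  have hcont : Continuous fun x => (tent x : ℂ) := continuous_ofReal.comp continuous_tent
  have hinv := congrFun (hcont.fourierInv_fourier_eq integrable_tent
    (by rw [hfourier]; exact integrable_fejer.ofReal)) x
  rw [hfourier, Real.fourierInv_eq'] at hinv
  rw [← hinv]
  simp [mul_comm]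

lemma integral_fejer : ∫ w, fejer w = 1 := by
  have h0 := integral_exp_mul_fejer 0
  simp only [mul_zero, ofReal_zero, zero_mul, Complex.exp_zero, one_mul,
    tent_of_mem_Icc (Set.left_mem_Icc.2 zero_le_one), sub_zero, integral_complex_ofReal] at h0
  exact_mod_cast h0

end Fejer

/-! ### Smoothed Dirichlet series -/

section ParametricIntegral

variable {α : Type*} [MeasurableSpace α] {μ : Measure α} {F : ℂ → α → ℂ} {bound : α → ℝ} {c : ℂ}
  {r : ℝ}

lemma aestronglyMeasurable_deriv_param (hr : 0 < r)
    (hmeas : ∀ z ∈ Metric.ball c r, AEStronglyMeasurable (F z) μ)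
    (hdiff : ∀ a, DifferentiableAt ℂ (F · a) c) :
    AEStronglyMeasurable (fun a => deriv (F · a) c) μ := by
  obtain ⟨u, -, hu, hu_lim⟩ := exists_seq_strictAnti_tendsto' hr
  have hlim : Tendsto (fun n => c + u n) atTop (𝓝[≠] c) := by
    refine tendsto_nhdsWithin_iff.2 ⟨?_, Eventually.of_forall fun n => ?_⟩
    · simpa using ((continuous_ofReal.tendsto 0).comp hu_lim).const_add c
    · simpa using (hu n).1.ne'
  refine aestronglyMeasurable_of_tendsto_ae atTop (fun n => ?_)
    (ae_of_all μ fun a => (hdiff a).hasDerivAt.tendsto_slope.comp hlim)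
  have hmem : c + u n ∈ Metric.ball c r := by
    simpa [dist_eq_norm, abs_of_pos (hu n).1] using (hu n).2
  exact ((hmeas _ hmem).sub (hmeas c (Metric.mem_ball_self hr))).const_smul (c + u n - c)⁻¹

lemma differentiableAt_integral_of_norm_le (hr : 0 < r)
    (hmeas : ∀ z ∈ Metric.ball c r, AEStronglyMeasurable (F z) μ)
    (hdiff : ∀ a, DifferentiableOn ℂ (F · a) (Metric.ball c r))
    (hbound : ∀ a, ∀ z ∈ Metric.ball c r, ‖F z a‖ ≤ bound a) (hint : Integrable bound μ) :
    DifferentiableAt ℂ (fun z => ∫ a, F z a ∂μ) c := by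
  have hat : ∀ a, ∀ z ∈ Metric.ball c r, DifferentiableAt ℂ (F · a) z := fun a z hz =>
    (hdiff a).differentiableAt (Metric.isOpen_ball.mem_nhds hz)
  have hc : c ∈ Metric.ball c r := Metric.mem_ball_self hr
  have hsub : Metric.ball c (r / 2) ⊆ Metric.ball c r := Metric.ball_subset_ball (by linarith)
  have hderiv : ∀ a, ∀ z ∈ Metric.ball c (r / 2), ‖deriv (F · a) z‖ ≤ bound a / (r / 4) := by
    intro a z hz
    have hball : Metric.closedBall z (r / 4) ⊆ Metric.ball c r := by
      refine Metric.closedBall_subset_ball' ?_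
      linarith [Metric.mem_ball.1 hz]
    exact norm_deriv_le_of_forall_mem_sphere_norm_le (by positivity)
      ((hdiff a).diffContOnCl_ball hball)
      fun w hw => hbound a w (hball (Metric.sphere_subset_closedBall hw))
  exact (hasDerivAt_integral_of_dominated_loc_of_deriv_le (Metric.ball_mem_nhds c (half_pos hr))
    (eventually_of_mem (Metric.ball_mem_nhds c hr) hmeas)
    (hint.mono' (hmeas c hc) (ae_of_all μ fun a => hbound a c hc))
    (aestronglyMeasurable_deriv_param hr hmeas fun a => hat a c hc)
    (ae_of_all μ hderiv) (hint.div_const _)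
    (ae_of_all μ fun a z hz => (hat a z (hsub hz)).hasDerivAt)).2.differentiableAt

end ParametricIntegral

section VerticalAverage

/-- The imaginary number `2πiw / Y`: averaging a Dirichlet series over its vertical translates by
`verticalShift Y w` against `fejer w` smooths its coefficients at scale `log n ≍ Y`. -/
noncomputable def verticalShift (Y w : ℝ) : ℂ := ((2 * π * w / Y : ℝ) : ℂ) * I

variable {Y : ℝ}

lemma continuous_verticalShift (Y : ℝ) : Continuous (verticalShift Y) := by
  unfold verticalShift
  fun_prop

lemma add_verticalShift_re (Y w : ℝ) (s : ℂ) : (s + verticalShift Y w).re = s.re := by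
  simp [verticalShift]

lemma norm_verticalShift (hY : 0 < Y) (w : ℝ) : ‖verticalShift Y w‖ = 2 * π / Y * |w| := by
  rw [verticalShift, norm_mul, Complex.norm_I, mul_one, Complex.norm_real, Real.norm_eq_abs,
    abs_div, abs_mul, abs_of_pos hY, abs_of_pos Real.two_pi_pos]
  ring

lemma integrable_one_add_abs_rpow : Integrable fun w : ℝ => (1 + |w|) ^ (-(3 / 2) : ℝ) := by
  simpa using integrable_one_add_norm (E := ℝ) (μ := volume) (r := 3 / 2) (by norm_num)

lemma rpow_mul_fejer_le {a b : ℝ} (ha : 0 ≤ a) (hb : 0 ≤ b) (w : ℝ) :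
    (a + b * |w|) ^ (1 / 2 : ℝ) * fejer w
      ≤ 4 * (a + b) ^ (1 / 2 : ℝ) * (1 + |w|) ^ (-(3 / 2) : ℝ) := by
  have hroot : (a + b * |w|) ^ (1 / 2 : ℝ) ≤ (a + b) ^ (1 / 2 : ℝ) * (1 + |w|) ^ (1 / 2 : ℝ) := by
    rw [← Real.mul_rpow (by positivity) (by positivity)]
    gcongr
    nlinarith [abs_nonneg w, mul_nonneg ha (abs_nonneg w)]
  calc (a + b * |w|) ^ (1 / 2 : ℝ) * fejer w
      ≤ ((a + b) ^ (1 / 2 : ℝ) * (1 + |w|) ^ (1 / 2 : ℝ)) * (4 * (1 + |w|) ^ (-2 : ℝ)) := by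
        gcongr
        exacts [fejer_nonneg w, fejer_le w]
    _ = 4 * (a + b) ^ (1 / 2 : ℝ) * ((1 + |w|) ^ (1 / 2 : ℝ) * (1 + |w|) ^ (-2 : ℝ)) := by ring
    _ = _ := by rw [← Real.rpow_add (by positivity)]; norm_num

variable {f : ℂ → ℂ} {σ : ℝ} {s : ℂ}

lemma continuous_mul_fejer (hf : ContinuousOn f {z | σ < z.re}) (hs : σ < s.re) :
    Continuous fun w => f (s + verticalShift Y w) * fejer w := by
  refine .mul ?_ (continuous_ofReal.comp continuous_fejer)
  exact hf.comp_continuous (continuous_const.add (continuous_verticalShift Y)) fun w => by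
    rwa [Set.mem_ofPred_eq, add_verticalShift_re]

lemma norm_mul_fejer_le (hY : 0 < Y) {K R : ℝ} (hK : 0 ≤ K) (hR : 0 ≤ R)
    (hf : ∀ z, σ ≤ z.re → ‖f z‖ ≤ K * (‖z‖ + 1) ^ (1 / 2 : ℝ)) (hs : σ ≤ s.re) (hsR : ‖s‖ ≤ R)
    (w : ℝ) :
    ‖f (s + verticalShift Y w) * fejer w‖
      ≤ K * (4 * (R + 1 + 2 * π / Y) ^ (1 / 2 : ℝ)) * (1 + |w|) ^ (-(3 / 2) : ℝ) := by
  have hnorm : ‖s + verticalShift Y w‖ + 1 ≤ R + 1 + 2 * π / Y * |w| := by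
    linarith [norm_add_le s (verticalShift Y w), norm_verticalShift hY w]
  rw [norm_mul, Complex.norm_real, Real.norm_of_nonneg (fejer_nonneg w)]
  calc ‖f (s + verticalShift Y w)‖ * fejer w
      ≤ K * (R + 1 + 2 * π / Y * |w|) ^ (1 / 2 : ℝ) * fejer w := by
        refine mul_le_mul_of_nonneg_right ?_ (fejer_nonneg w)
        refine (hf _ (by rwa [add_verticalShift_re])).trans ?_
        gcongr
    _ = K * ((R + 1 + 2 * π / Y * |w|) ^ (1 / 2 : ℝ) * fejer w) := mul_assoc _ _ _
    _ ≤ K * (4 * (R + 1 + 2 * π / Y) ^ (1 / 2 : ℝ) * (1 + |w|) ^ (-(3 / 2) : ℝ)) := by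
        exact mul_le_mul_of_nonneg_left
          (rpow_mul_fejer_le (by positivity) (by positivity) w) hK
    _ = _ := (mul_assoc _ _ _).symm

lemma integrable_mul_fejer (hY : 0 < Y) (hf : ContinuousOn f {z | σ < z.re}) {K ε : ℝ}
    (hK : 0 ≤ K) (hε : 0 < ε)
    (hfK : ∀ z, σ + ε ≤ z.re → ‖f z‖ ≤ K * (‖z‖ + 1) ^ (1 / 2 : ℝ)) (hs : σ + ε ≤ s.re) :
    Integrable fun w => f (s + verticalShift Y w) * fejer w :=
  (integrable_one_add_abs_rpow.const_mul _).mono'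
    (continuous_mul_fejer hf (by linarith)).aestronglyMeasurable
    (ae_of_all _ (norm_mul_fejer_le hY hK (norm_nonneg s) hfK hs le_rfl))

lemma differentiableAt_integral_mul_fejer (hY : 0 < Y)
    (hf : DifferentiableOn ℂ f {z | σ < z.re}) {K ε : ℝ} (hK : 0 ≤ K) (hε : 0 < ε)
    (hfK : ∀ z, σ + ε ≤ z.re → ‖f z‖ ≤ K * (‖z‖ + 1) ^ (1 / 2 : ℝ)) (hs : σ + 2 * ε ≤ s.re) :
    DifferentiableAt ℂ (fun z => ∫ w, f (z + verticalShift Y w) * fejer w) s := by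
  have hre : ∀ z ∈ Metric.ball s ε, σ + ε ≤ z.re := fun z hz => by
    linarith [re_sub_norm_le_re z s, mem_ball_iff_norm.1 hz]
  refine differentiableAt_integral_of_norm_le hε
    (fun z hz => (continuous_mul_fejer hf.continuousOn
      (by linarith [hre z hz])).aestronglyMeasurable)
    (fun w => (hf.comp (differentiableOn_id.add_const _) fun z hz => ?_).mul_const _)
    (fun w z hz => norm_mul_fejer_le hY hK (by positivity) hfK (hre z hz) (R := ‖s‖ + ε) ?_ w)
    (integrable_one_add_abs_rpow.const_mul _)
  · rw [Set.mem_ofPred_eq, id_eq, add_verticalShift_re]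
    linarith [hre z hz]
  · linarith [norm_sub_norm_le z s, mem_ball_iff_norm.1 hz]

end VerticalAverage

section WeightedLSeries

/-- The Dirichlet series `∑ f(n) k(log n / X) n⁻ˢ`; it is a finite sum for every `s` when the
weight `k` vanishes on `[1, ∞)`. -/
noncomputable def weightedLSeries (f : ℕ → ℂ) (k : ℝ → ℝ) (X : ℝ) (s : ℂ) : ℂ :=
  ∑' n, LSeries.term f s n * k (Real.log n / X)

variable {f : ℕ → ℂ} {k : ℝ → ℝ} {X : ℝ}

lemma weightedLSeries_eq_sum (hk : ∀ x, 1 ≤ x → k x = 0) (hX : 0 < X) {N : ℕ}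
    (hN : Real.exp X ≤ N) (s : ℂ) :
    weightedLSeries f k X s = ∑ n ∈ range N, LSeries.term f s n * k (Real.log n / X) := by
  refine tsum_eq_sum fun n hn => ?_
  have hXn : Real.exp X ≤ n := hN.trans (by simpa using hn)
  have : 1 ≤ Real.log n / X := by
    rwa [one_le_div hX, Real.le_log_iff_exp_le ((Real.exp_pos X).trans_le hXn)]
  rw [hk _ this, ofReal_zero, mul_zero]

lemma differentiable_term (f : ℕ → ℂ) (n : ℕ) : Differentiable ℂ fun s => LSeries.term f s n :=
  fun s => (LSeries.hasDerivAt_term f n s).differentiableAt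

lemma differentiable_weightedLSeries (hk : ∀ x, 1 ≤ x → k x = 0) (hX : 0 < X) :
    Differentiable ℂ (weightedLSeries f k X) := by
  rw [funext (weightedLSeries_eq_sum hk hX (Nat.le_ceil (Real.exp X)))]
  exact .fun_sum fun n _ => (differentiable_term f n).mul_const _

lemma term_add_verticalShift (f : ℕ → ℂ) (Y : ℝ) (s : ℂ) (n : ℕ) (w : ℝ) :
    LSeries.term f (s + verticalShift Y w) n
      = LSeries.term f s n * Complex.exp (↑(2 * π * (w * -(Real.log n / Y))) * I) := by
  rcases eq_or_ne n 0 with rfl | hn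
  · simp
  have hn' : (n : ℂ) ≠ 0 := Nat.cast_ne_zero.2 hn
  rw [LSeries.term_of_ne_zero hn, LSeries.term_of_ne_zero hn, Complex.cpow_add _ _ hn', ← div_div,
    div_eq_mul_inv (f n / _), Complex.cpow_def_of_ne_zero hn' (verticalShift Y w),
    ← Complex.exp_neg, ← Complex.natCast_log, verticalShift]
  congr 2
  push_cast
  ring

lemma tent_of_one_le {x : ℝ} (hx : 1 ≤ x) : tent x = 0 :=
  max_eq_left (by linarith [le_abs_self x])

lemma weightedLSeries_tent_eq_integral (Y : ℝ) {s : ℂ} (hf : LSeriesSummable f s) :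
    weightedLSeries f tent Y s = ∫ w, LSeries f (s + verticalShift Y w) * fejer w := by
  have hnorm : ∀ n w, ‖LSeries.term f (s + verticalShift Y w) n * fejer w‖
      = ‖LSeries.term f s n‖ * fejer w := fun n w => by
    rw [term_add_verticalShift, norm_mul, norm_mul, Complex.norm_exp_ofReal_mul_I, mul_one,
      Complex.norm_real, Real.norm_of_nonneg (fejer_nonneg w)]
  have hint : ∀ n, Integrable fun w => LSeries.term f (s + verticalShift Y w) n * fejer w := by
    refine fun n => (integrable_fejer.const_mul ‖LSeries.term f s n‖).mono' ?_
      (ae_of_all _ fun w => (hnorm n w).le)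
    exact ((differentiable_term f n).continuous.comp
      (continuous_const.add (continuous_verticalShift Y))).mul
      (continuous_ofReal.comp continuous_fejer) |>.aestronglyMeasurable
  have hsum : Summable fun n => ∫ w, ‖LSeries.term f (s + verticalShift Y w) n * fejer w‖ := by
    simp_rw [hnorm, integral_const_mul, integral_fejer, mul_one]
    exact hf.norm
  have hterm : ∀ n, ∫ w, LSeries.term f (s + verticalShift Y w) n * fejer w
      = LSeries.term f s n * tent (Real.log n / Y) := fun n => by
    simp_rw [term_add_verticalShift, mul_assoc (LSeries.term f s n), integral_const_mul]
    rw [integral_exp_mul_fejer, tent_neg]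
  have := hasSum_integral_of_summable_integral_norm hint hsum
  simp_rw [hterm, tsum_mul_right] at this
  exact this.tsum_eq

end WeightedLSeries

section LogDeriv

variable {q : ℕ} {χ : DirichletCharacter ℂ q} {Y : ℝ} {s : ℂ}

/-- The coefficients `χ(n) Λ(n)` of the Dirichlet series of `-L'/L`. -/
noncomputable def twistedVonMangoldt (χ : DirichletCharacter ℂ q) (n : ℕ) : ℂ :=
  χ n * ArithmeticFunction.vonMangoldt n

variable [NeZero q]

lemma LSeries_twistedVonMangoldt (χ : DirichletCharacter ℂ q) (hs : 1 < s.re) :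
    LSeries (twistedVonMangoldt χ) s = -logDeriv (LFunction χ) s := by
  rw [logDeriv_apply, deriv_LFunction_eq_deriv_LSeries χ hs, LFunction_eq_LSeries χ hs, ← neg_div]
  exact LSeries_twist_vonMangoldt_eq χ hs

lemma continuousOn_logDeriv_LFunction (hRH : dirichletRH χ) (hχ : χ ≠ 1) :
    ContinuousOn (logDeriv (LFunction χ)) {z | 1 / 2 < z.re} :=
  (differentiableOn_logDeriv_LFunction hRH hχ).continuousOn

lemma integrable_logDeriv_mul_fejer (hRH : dirichletRH χ) (hχ : χ ≠ 1) (hY : 0 < Y)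
    (hs : 1 / 2 < s.re) :
    Integrable fun w => -logDeriv (LFunction χ) (s + verticalShift Y w) * fejer w := by
  obtain ⟨K, hK, hbound⟩ := exists_norm_logDeriv_LFunction_le hRH hχ (sub_pos.2 hs)
  exact integrable_mul_fejer (f := fun z => -logDeriv (LFunction χ) z) hY
    (continuousOn_logDeriv_LFunction hRH hχ).neg hK (sub_pos.2 hs)
    (fun z hz => (norm_neg _).trans_le (hbound z hz).2) (by linarith)

lemma differentiableAt_integral_logDeriv_mul_fejer (hRH : dirichletRH χ) (hχ : χ ≠ 1) (hY : 0 < Y)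
    (hs : 1 / 2 < s.re) :
    DifferentiableAt ℂ
      (fun z => ∫ w, -logDeriv (LFunction χ) (z + verticalShift Y w) * fejer w) s := by
  have hε : 0 < (s.re - 1 / 2) / 2 := by linarith
  obtain ⟨K, hK, hbound⟩ := exists_norm_logDeriv_LFunction_le hRH hχ hε
  exact differentiableAt_integral_mul_fejer (f := fun z => -logDeriv (LFunction χ) z) hY
    (differentiableOn_logDeriv_LFunction hRH hχ).neg hK hε
    (fun z hz => (norm_neg _).trans_le (hbound z hz).2) (by linarith)

lemma weightedLSeries_twistedVonMangoldt_eq_integral (hRH : dirichletRH χ) (hχ : χ ≠ 1)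
    (hY : 0 < Y) (hs : 1 / 2 < s.re) :
    weightedLSeries (twistedVonMangoldt χ) tent Y s
      = ∫ w, -logDeriv (LFunction χ) (s + verticalShift Y w) * fejer w := by
  have hleft : AnalyticOnNhd ℂ (weightedLSeries (twistedVonMangoldt χ) tent Y)
      {z | 1 / 2 < z.re} :=
    (differentiable_weightedLSeries (fun _ => tent_of_one_le) hY).differentiableOn.analyticOnNhd
      isOpen_half_lt_re
  have hright : AnalyticOnNhd ℂ
      (fun z => ∫ w, -logDeriv (LFunction χ) (z + verticalShift Y w) * fejer w)
      {z | 1 / 2 < z.re} :=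
    DifferentiableOn.analyticOnNhd (fun z hz =>
      (differentiableAt_integral_logDeriv_mul_fejer hRH hχ hY hz).differentiableWithinAt)
      isOpen_half_lt_re
  refine hleft.eqOn_of_preconnected_of_eventuallyEq hright
    (convex_halfSpace_re_gt (1 / 2)).isPreconnected (z₀ := 2) (by norm_num) ?_ hs
  have hnhds : {z : ℂ | 1 < z.re} ∈ 𝓝 2 :=
    (isOpen_lt continuous_const Complex.continuous_re).mem_nhds (by simp)
  filter_upwards [hnhds] with z hz
  rw [weightedLSeries_tent_eq_integral Y
    (show LSeriesSummable (twistedVonMangoldt χ) z from LSeriesSummable_twist_vonMangoldt χ hz)]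
  refine integral_congr_ae (ae_of_all _ fun w => ?_)
  simp only [← LSeries_twistedVonMangoldt χ ((add_verticalShift_re Y w z).symm ▸ hz)]

end LogDeriv

section Bound

/-- The constant in `re_weightedLSeries_twistedVonMangoldt_le`; the integral is the average growth
of `log ‖s‖` over the vertical translates of `s`. -/
noncomputable def smoothingConst : ℝ :=
  1 + Real.log gammaRatioConst + ∫ w, Real.log (1 + 10 * |w|) * fejer w

lemma log_mul_fejer_nonneg (w : ℝ) : 0 ≤ Real.log (1 + 10 * |w|) * fejer w :=
  mul_nonneg (Real.log_nonneg (by linarith [abs_nonneg w])) (fejer_nonneg w)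

lemma integral_log_mul_fejer_nonneg : 0 ≤ ∫ w, Real.log (1 + 10 * |w|) * fejer w :=
  integral_nonneg log_mul_fejer_nonneg

lemma integrable_log_mul_fejer : Integrable fun w => Real.log (1 + 10 * |w|) * fejer w := by
  refine ((integrable_one_add_abs_rpow.const_mul (4 * (1 + 10) ^ (1 / 2 : ℝ))).const_mul 2).mono'
    ?_ (ae_of_all _ fun w => ?_)
  · exact (Measurable.mul (by fun_prop) continuous_fejer.measurable).aestronglyMeasurable
  rw [Real.norm_of_nonneg (log_mul_fejer_nonneg w)]
  have hlog : Real.log (1 + 10 * |w|) ≤ 2 * (1 + 10 * |w|) ^ (1 / 2 : ℝ) := by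
    have := Real.log_le_rpow_div (x := 1 + 10 * |w|) (by positivity) one_half_pos
    linarith
  calc Real.log (1 + 10 * |w|) * fejer w
      ≤ 2 * ((1 + 10 * |w|) ^ (1 / 2 : ℝ) * fejer w) := by
        rw [← mul_assoc]
        exact mul_le_mul_of_nonneg_right hlog (fejer_nonneg w)
    _ ≤ _ := mul_le_mul_of_nonneg_left (rpow_mul_fejer_le zero_le_one (by norm_num) w) two_pos.le

lemma one_le_smoothingConst : 1 ≤ smoothingConst := by
  have := Real.log_nonneg one_le_gammaRatioConst
  have := integral_log_mul_fejer_nonneg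
  unfold smoothingConst
  linarith

variable {q : ℕ} [NeZero q] {χ : DirichletCharacter ℂ q} {Y : ℝ} {s : ℂ}

lemma two_le_of_ne_one (hχ1 : χ ≠ 1) : 2 ≤ q := by
  have : q ≠ 1 := by
    rintro rfl
    exact hχ1 (level_one χ)
  have := NeZero.ne q
  omega

lemma one_le_log_mul_norm (hχ1 : χ ≠ 1) (hs : 0 ≤ s.re) : 1 ≤ Real.log (q * ‖s + 2‖) := by
  have hq : (2 : ℝ) ≤ q := mod_cast two_le_of_ne_one hχ1
  have hnorm : 2 ≤ ‖s + 2‖ := by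
    have := Complex.re_le_norm (s + 2)
    rw [Complex.add_re, Complex.re_ofNat] at this
    linarith
  rw [Real.le_log_iff_exp_le (by positivity)]
  nlinarith [Real.exp_one_lt_d9]

lemma norm_add_verticalShift_le (hY : Real.log 2 ≤ Y) (hs : 1 ≤ ‖s‖) (w : ℝ) :
    ‖s + verticalShift Y w‖ ≤ ‖s‖ * (1 + 10 * |w|) := by
  have hY0 : 0 < Y := (Real.log_pos one_lt_two).trans_le hY
  have hfreq : 2 * π / Y ≤ 10 := by
    rw [div_le_iff₀ hY0]
    linarith [Real.pi_lt_d2, Real.log_two_gt_d9]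
  calc ‖s + verticalShift Y w‖ ≤ ‖s‖ + 10 * |w| := by
        refine (norm_add_le _ _).trans ?_
        rw [norm_verticalShift hY0]
        gcongr
    _ ≤ ‖s‖ * (1 + 10 * |w|) := by nlinarith [abs_nonneg w]

lemma re_neg_logDeriv_add_verticalShift_le (hχ : χ.IsPrimitive) (hχ1 : χ ≠ 1)
    (hRH : dirichletRH χ) (hY : Real.log 2 ≤ Y) (hs : 1 / 2 < s.re) (w : ℝ) :
    (-logDeriv (LFunction χ) (s + verticalShift Y w)).re
      ≤ 1 / 2 * (Real.log gammaRatioConst + Real.log (q * ‖s + 2‖)) +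
        1 / 2 * Real.log (1 + 10 * |w|) := by
  have hs' : 1 / 2 < (s + verticalShift Y w).re := by rwa [add_verticalShift_re]
  have hC := one_le_gammaRatioConst
  have hnorm : ∀ z : ℂ, 1 / 2 < z.re → 1 ≤ ‖z + 2‖ := fun z hz => by
    have := Complex.re_le_norm (z + 2)
    rw [Complex.add_re, Complex.re_ofNat] at this
    linarith
  have hpos : 0 < (q : ℝ) * ‖s + 2‖ := mul_pos (Nat.cast_pos.2 (NeZero.pos q))
    (one_pos.trans_le (hnorm s hs))
  have hlog : Real.log (gammaRatioConst * q * ‖s + verticalShift Y w + 2‖)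
      ≤ Real.log gammaRatioConst + Real.log (q * ‖s + 2‖) + Real.log (1 + 10 * |w|) := by
    rw [← Real.log_mul (by positivity) hpos.ne', ← Real.log_mul (by positivity) (by positivity)]
    have hpos' : 0 < ‖s + verticalShift Y w + 2‖ := one_pos.trans_le (hnorm _ hs')
    have hq : (0 : ℝ) < q := Nat.cast_pos.2 (NeZero.pos q)
    refine Real.log_le_log (by positivity) ?_
    rw [mul_assoc, mul_assoc, mul_assoc, add_right_comm]
    gcongr
    exact norm_add_verticalShift_le hY (hnorm s hs) w
  rw [Complex.neg_re]
  linarith [neg_re_logDeriv_LFunction_le hχ hχ1 hRH hs']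

lemma re_weightedLSeries_twistedVonMangoldt_le (hχ : χ.IsPrimitive) (hχ1 : χ ≠ 1)
    (hRH : dirichletRH χ) (hY : Real.log 2 ≤ Y) (hs : 1 / 2 < s.re) :
    (weightedLSeries (twistedVonMangoldt χ) tent Y s).re
      ≤ smoothingConst * Real.log (q * ‖s + 2‖) := by
  have hY0 : 0 < Y := (Real.log_pos one_lt_two).trans_le hY
  set Q := Real.log (q * ‖s + 2‖)
  set A := 1 / 2 * (Real.log gammaRatioConst + Q) with hA
  set J := ∫ w, Real.log (1 + 10 * |w|) * fejer w with hJ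
  have hQ : 1 ≤ Q := one_le_log_mul_norm hχ1 (by linarith)
  have hint := integrable_logDeriv_mul_fejer hRH hχ1 hY0 hs
  calc (weightedLSeries (twistedVonMangoldt χ) tent Y s).re
      = ∫ w, (-logDeriv (LFunction χ) (s + verticalShift Y w) * fejer w).re := by
        rw [weightedLSeries_twistedVonMangoldt_eq_integral hRH hχ1 hY0 hs]
        exact (integral_re hint).symm
    _ ≤ ∫ w, (A * fejer w + 1 / 2 * (Real.log (1 + 10 * |w|) * fejer w)) := by
        refine integral_mono hint.re
          ((integrable_fejer.const_mul A).add (integrable_log_mul_fejer.const_mul _)) fun w => ?_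
        have := mul_le_mul_of_nonneg_right
          (re_neg_logDeriv_add_verticalShift_le hχ hχ1 hRH hY hs w) (fejer_nonneg w)
        rwa [add_mul, mul_assoc (1 / 2) (Real.log (1 + 10 * |w|)), ← Complex.re_mul_ofReal] at this
    _ = A + 1 / 2 * J := by
        rw [integral_add (integrable_fejer.const_mul A) (integrable_log_mul_fejer.const_mul _),
          integral_const_mul, integral_const_mul, integral_fejer, mul_one]
    _ ≤ smoothingConst * Q := by
        have hlog := Real.log_nonneg one_le_gammaRatioConst
        have hJ0 : 0 ≤ J := integral_log_mul_fejer_nonneg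
        rw [smoothingConst, ← hJ]
        linarith [mul_le_mul_of_nonneg_left hQ hlog, mul_le_mul_of_nonneg_left hQ hJ0]

end Bound

/-! ### Bounding the logarithm of an `L`-function by a short Dirichlet polynomial -/

section TentSq

variable {f : ℕ → ℂ}

lemma hasDerivAt_max_zero_sq (u : ℝ) : HasDerivAt (fun v => max 0 v ^ 2) (2 * max 0 u) u := by
  rcases lt_trichotomy u 0 with hu | rfl | hu
  · rw [max_eq_left hu.le, mul_zero]
    refine (hasDerivAt_const u (0 : ℝ)).congr_of_eventuallyEq ?_
    filter_upwards [gt_mem_nhds hu] with v hv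
    rw [max_eq_left hv.le, zero_pow two_ne_zero]
  · rw [max_self, mul_zero, hasDerivAt_iff_isLittleO_nhds_zero]
    refine Asymptotics.IsBigO.trans_isLittleO (.of_bound 1 (Eventually.of_forall fun v => ?_))
      (Asymptotics.isLittleO_pow_id one_lt_two)
    rcases le_total 0 v with hv | hv <;> simp [hv, sq_nonneg]
  · rw [max_eq_right hu.le]
    refine (by simpa using hasDerivAt_pow 2 u : HasDerivAt (fun v : ℝ => v ^ 2) _ u)
      |>.congr_of_eventuallyEq ?_
    filter_upwards [lt_mem_nhds hu] with v hv
    rw [max_eq_right hv.le]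

lemma hasDerivAt_tent_div_sq {y X : ℝ} (hy : 0 ≤ y) (hX : 0 < X) :
    HasDerivAt (fun X => tent (y / X) ^ 2) (2 / X ^ 2 * (y * tent (y / X))) X := by
  have htent : ∀ Z, 0 < Z → tent (y / Z) = max 0 (1 - y / Z) := fun Z hZ => by
    rw [tent, abs_of_nonneg (by positivity)]
  have hinner : HasDerivAt (fun X => 1 - y / X) (-(y * -(X ^ 2)⁻¹)) X :=
    ((hasDerivAt_inv hX.ne').const_mul y).const_sub 1
  have hval : 2 / X ^ 2 * (y * tent (y / X)) = 2 * max 0 (1 - y / X) * -(y * -(X ^ 2)⁻¹) := by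
    rw [htent X hX]
    ring
  rw [hval]
  refine ((hasDerivAt_max_zero_sq (1 - y / X)).comp X hinner).congr_of_eventuallyEq ?_
  filter_upwards [lt_mem_nhds hX] with Z hZ
  rw [htent Z hZ, Function.comp_apply]

lemma tent_sq_of_one_le (x : ℝ) (hx : 1 ≤ x) : tent x ^ 2 = 0 := by
  rw [tent_of_one_le hx, zero_pow two_ne_zero]

lemma norm_tent_sq_le_one (x : ℝ) : ‖tent x ^ 2‖ ≤ 1 := by
  rw [Real.norm_of_nonneg (sq_nonneg _)]
  exact pow_le_one₀ (le_max_left _ _) (max_le zero_le_one (by linarith [abs_nonneg x]))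

lemma term_logMul (f : ℕ → ℂ) (s : ℂ) (n : ℕ) :
    LSeries.term (LSeries.logMul f) s n = LSeries.term f s n * Real.log n := by
  rcases eq_or_ne n 0 with rfl | hn
  · simp
  · rw [LSeries.term_of_ne_zero hn, LSeries.term_of_ne_zero hn, Complex.natCast_log]
    ring

lemma hasDerivAt_weightedLSeries_tent_sq (s : ℂ) {X : ℝ} (hX : 0 < X) :
    HasDerivAt (fun X => weightedLSeries f (fun x => tent x ^ 2) X s)
      ((2 / X ^ 2 : ℝ) * weightedLSeries (LSeries.logMul f) tent X s) X := by
  set N := ⌈Real.exp (X + 1)⌉₊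
  have hN : ∀ Z < X + 1, Real.exp Z ≤ N := fun Z hZ =>
    (Real.exp_le_exp.2 hZ.le).trans (Nat.le_ceil _)
  rw [weightedLSeries_eq_sum (fun _ => tent_of_one_le) hX (hN X (lt_add_one X)), mul_sum]
  have hsum : HasDerivAt
      (fun Z => ∑ n ∈ range N, LSeries.term f s n * ((tent (Real.log n / Z) ^ 2 : ℝ) : ℂ))
      (∑ n ∈ range N, LSeries.term f s n *
        ((2 / X ^ 2 * (Real.log n * tent (Real.log n / X)) : ℝ) : ℂ)) X :=
    HasDerivAt.fun_sum fun n _ =>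
      (hasDerivAt_tent_div_sq (Real.log_natCast_nonneg n) hX).ofReal_comp.const_mul _
  refine (hsum.congr_of_eventuallyEq ?_).congr_deriv (sum_congr rfl fun n _ => ?_)
  · filter_upwards [Ioo_mem_nhds hX (lt_add_one X)] with Z hZ
    exact weightedLSeries_eq_sum tent_sq_of_one_le hZ.1 (hN Z hZ.2) s
  · rw [term_logMul]
    push_cast
    ring

lemma tendsto_weightedLSeries {k : ℝ → ℝ} (hk : Continuous k) (hk0 : k 0 = 1)
    (hk1 : ∀ x, |k x| ≤ 1) {s : ℂ} (hf : LSeriesSummable f s) :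
    Tendsto (fun X => weightedLSeries f k X s) atTop (𝓝 (LSeries f s)) := by
  refine tendsto_tsum_of_dominated_convergence hf.norm (fun n => ?_)
    (Eventually.of_forall fun X n => ?_)
  · have hlim : Tendsto (fun X : ℝ => k (Real.log n / X)) atTop (𝓝 1) :=
      hk0 ▸ (hk.tendsto 0).comp (tendsto_const_nhds.div_atTop tendsto_id)
    simpa using hlim.ofReal.const_mul (LSeries.term f s n)
  · rw [norm_mul, Complex.norm_real, Real.norm_eq_abs]
    exact mul_le_of_le_one_right (norm_nonneg _) (hk1 _)

end TentSq

section SmoothedLog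

variable {q : ℕ} {χ : DirichletCharacter ℂ q} {s : ℂ}

/-- The coefficients `χ(n) Λ(n) / log n` of the Dirichlet series of `log L`. -/
noncomputable def logLCoeff (χ : DirichletCharacter ℂ q) (n : ℕ) : ℂ :=
  χ n * ArithmeticFunction.vonMangoldt n / Real.log n

/-- The Dirichlet polynomial of length `exp X` approximating `log L(s, χ)`. -/
noncomputable def smoothedLog (χ : DirichletCharacter ℂ q) (X : ℝ) (s : ℂ) : ℂ :=
  weightedLSeries (logLCoeff χ) (fun x => tent x ^ 2) X s

lemma logMul_logLCoeff (χ : DirichletCharacter ℂ q) :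
    LSeries.logMul (logLCoeff χ) = twistedVonMangoldt χ := by
  ext n
  rw [LSeries.logMul, logLCoeff, twistedVonMangoldt, ← Complex.natCast_log]
  rcases eq_or_ne (Real.log n) 0 with hn | hn
  · have : ArithmeticFunction.vonMangoldt n = 0 :=
      le_antisymm (hn ▸ ArithmeticFunction.vonMangoldt_le_log) ArithmeticFunction.vonMangoldt_nonneg
    simp [this]
  · exact mul_div_cancel₀ _ (ofReal_ne_zero.2 hn)

lemma norm_logLCoeff_le (χ : DirichletCharacter ℂ q) (n : ℕ) : ‖logLCoeff χ n‖ ≤ 1 := by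
  rw [logLCoeff, norm_div, norm_mul, Complex.norm_real, Complex.norm_real,
    Real.norm_of_nonneg ArithmeticFunction.vonMangoldt_nonneg,
    Real.norm_of_nonneg (Real.log_natCast_nonneg n)]
  refine div_le_one_of_le₀ ?_ (Real.log_natCast_nonneg n)
  exact (mul_le_of_le_one_left ArithmeticFunction.vonMangoldt_nonneg (χ.norm_le_one _)).trans
    ArithmeticFunction.vonMangoldt_le_log

lemma LSeriesSummable_logLCoeff (χ : DirichletCharacter ℂ q) (hs : 1 < s.re) :
    LSeriesSummable (logLCoeff χ) s :=
  LSeriesSummable_of_bounded_of_one_lt_re (fun n _ => norm_logLCoeff_le χ n) hs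

lemma differentiable_smoothedLog (χ : DirichletCharacter ℂ q) {X : ℝ} (hX : 0 < X) :
    Differentiable ℂ (smoothedLog χ X) :=
  differentiable_weightedLSeries tent_sq_of_one_le hX

lemma tendsto_smoothedLog (χ : DirichletCharacter ℂ q) (hs : 1 < s.re) :
    Tendsto (fun X => smoothedLog χ X s) atTop (𝓝 (LSeries (logLCoeff χ) s)) :=
  tendsto_weightedLSeries (continuous_tent.pow 2) (by norm_num [tent]) norm_tent_sq_le_one
    (LSeriesSummable_logLCoeff χ hs)

lemma hasDerivAt_smoothedLog (χ : DirichletCharacter ℂ q) (s : ℂ) {X : ℝ} (hX : 0 < X) :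
    HasDerivAt (fun X => smoothedLog χ X s)
      ((2 / X ^ 2 : ℝ) * weightedLSeries (twistedVonMangoldt χ) tent X s) X :=
  logMul_logLCoeff χ ▸ hasDerivAt_weightedLSeries_tent_sq s hX

lemma hasDerivAt_two_mul_sub_inv (K X : ℝ) {Y : ℝ} (hY : 0 < Y) :
    HasDerivAt (fun Y => 2 * K * (X⁻¹ - Y⁻¹)) (2 / Y ^ 2 * K) Y :=
  (((hasDerivAt_inv hY.ne').const_sub _).const_mul (2 * K)).congr_deriv (by ring)

lemma norm_smoothedLog_sub_le {K X X' : ℝ} (hX : 0 < X) (hXX' : X ≤ X') (hK : 0 ≤ K)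
    (hbound : ∀ Y ≥ X, ‖weightedLSeries (twistedVonMangoldt χ) tent Y s‖ ≤ K) :
    ‖smoothedLog χ X' s - smoothedLog χ X s‖ ≤ 2 * K / X := by
  have hderiv := fun Y (hY : X ≤ Y) =>
    (hasDerivAt_smoothedLog χ s (hX.trans_le hY)).sub_const (smoothedLog χ X s)
  have hB := fun Y (hY : X ≤ Y) => hasDerivAt_two_mul_sub_inv K X (hX.trans_le hY)
  have hle := image_norm_le_of_norm_deriv_right_le_deriv_boundary'
    (fun Y hY => (hderiv Y hY.1).continuousAt.continuousWithinAt)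
    (fun Y hY => (hderiv Y hY.1).hasDerivWithinAt) (by simp)
    (fun Y hY => (hB Y hY.1).continuousAt.continuousWithinAt)
    (fun Y hY => (hB Y hY.1).hasDerivWithinAt)
    (fun Y hY => by
      rw [norm_mul, Complex.norm_real, Real.norm_of_nonneg (by positivity)]
      exact mul_le_mul_of_nonneg_left (hbound Y hY.1) (by positivity))
    (Set.right_mem_Icc.2 hXX')
  refine hle.trans ?_
  rw [div_eq_mul_inv]
  have : 0 ≤ X'⁻¹ := inv_nonneg.2 (hX.le.trans hXX')
  gcongr
  linarith

lemma re_smoothedLog_sub_le {K X X' : ℝ} (hX : 0 < X) (hXX' : X ≤ X') (hK : 0 ≤ K)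
    (hbound : ∀ Y ≥ X, (weightedLSeries (twistedVonMangoldt χ) tent Y s).re ≤ K) :
    (smoothedLog χ X' s).re - (smoothedLog χ X s).re ≤ 2 * K / X := by
  have hderiv := fun Y (hY : X ≤ Y) =>
    (Complex.reCLM.hasFDerivAt.comp_hasDerivAt Y
      (hasDerivAt_smoothedLog χ s (hX.trans_le hY))).sub_const (smoothedLog χ X s).re
  have hB := fun Y (hY : X ≤ Y) => hasDerivAt_two_mul_sub_inv K X (hX.trans_le hY)
  have hle := image_le_of_deriv_right_le_deriv_boundary
    (fun Y hY => (hderiv Y hY.1).continuousAt.continuousWithinAt)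
    (fun Y hY => (hderiv Y hY.1).hasDerivWithinAt) (by simp)
    (fun Y hY => (hB Y hY.1).continuousAt.continuousWithinAt)
    (fun Y hY => (hB Y hY.1).hasDerivWithinAt)
    (fun Y hY => by
      rw [Complex.reCLM_apply, Complex.re_ofReal_mul]
      exact mul_le_mul_of_nonneg_left (hbound Y hY.1) (by positivity))
    (Set.right_mem_Icc.2 hXX')
  refine hle.trans ?_
  rw [div_eq_mul_inv]
  have : 0 ≤ X'⁻¹ := inv_nonneg.2 (hX.le.trans hXX')
  gcongr
  linarith

variable [NeZero q]

lemma exp_LSeries_logLCoeff (χ : DirichletCharacter ℂ q) (hs : 1 < s.re) :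
    Complex.exp (LSeries (logLCoeff χ) s) = LFunction χ s := by
  rw [LFunction_eq_LSeries χ hs, ← LSeries_eq_exp_LSeries χ hs]
  rfl

lemma exists_norm_weightedLSeries_twistedVonMangoldt_le (hRH : dirichletRH χ) (hχ : χ ≠ 1)
    {ε R : ℝ} (hε : 0 < ε) (hR : 0 ≤ R) :
    ∃ K : ℝ, 0 ≤ K ∧ ∀ Y ≥ 1, ∀ s : ℂ, 1 / 2 + ε ≤ s.re → ‖s‖ ≤ R →
      ‖weightedLSeries (twistedVonMangoldt χ) tent Y s‖ ≤ K := by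
  obtain ⟨K, hK, hbound⟩ := exists_norm_logDeriv_LFunction_le hRH hχ hε
  have hbound' : ∀ z : ℂ, 1 / 2 + ε ≤ z.re →
      ‖-logDeriv (LFunction χ) z‖ ≤ K * (‖z‖ + 1) ^ (1 / 2 : ℝ) := fun z hz =>
    (norm_neg _).trans_le (hbound z hz).2
  refine ⟨∫ w : ℝ, K * (4 * (R + 1 + 2 * π) ^ (1 / 2 : ℝ)) * (1 + |w|) ^ (-(3 / 2) : ℝ),
    integral_nonneg fun w => by positivity, fun Y hY s hs hsR => ?_⟩
  have hY0 : 0 < Y := one_pos.trans_le hY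
  rw [weightedLSeries_twistedVonMangoldt_eq_integral hRH hχ hY0 (by linarith)]
  refine norm_integral_le_of_norm_le (integrable_one_add_abs_rpow.const_mul _)
    (ae_of_all _ fun w => ?_)
  refine (norm_mul_fejer_le (f := fun z => -logDeriv (LFunction χ) z) hY0 hK hR hbound' hs hsR
    w).trans ?_
  have : 2 * π / Y ≤ 2 * π := div_le_self Real.two_pi_pos.le hY
  gcongr

lemma exists_norm_smoothedLog_sub_le (hRH : dirichletRH χ) (hχ : χ ≠ 1) {c : ℂ}
    (hc : 1 / 2 < c.re) :
    ∃ K : ℝ, ∃ r > 0, Metric.ball c r ⊆ {z | 1 / 2 < z.re} ∧ ∀ z ∈ Metric.ball c r,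
      ∀ X X' : ℝ, 1 ≤ X → X ≤ X' → ‖smoothedLog χ X' z - smoothedLog χ X z‖ ≤ K / X := by
  set r := (c.re - 1 / 2) / 2 with hr
  have hr0 : 0 < r := by linarith
  have hre : ∀ z ∈ Metric.ball c r, 1 / 2 + r ≤ z.re := fun z hz => by
    linarith [re_sub_norm_le_re z c, mem_ball_iff_norm.1 hz]
  obtain ⟨K, hK, hbound⟩ := exists_norm_weightedLSeries_twistedVonMangoldt_le hRH hχ hr0
    (add_nonneg (norm_nonneg c) hr0.le)
  refine ⟨2 * K, r, hr0, fun z hz => ?_, fun z hz X X' hX hXX' => ?_⟩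
  · exact (by linarith [hre z hz] : 1 / 2 < z.re)
  · refine norm_smoothedLog_sub_le (by linarith) hXX' hK fun Y hY =>
      hbound Y (hX.trans hY) z (hre z hz) ?_
    linarith [norm_sub_norm_le z c, mem_ball_iff_norm.1 hz]

lemma exists_tendsto_smoothedLog (hRH : dirichletRH χ) (hχ : χ ≠ 1) (hs : 1 / 2 < s.re) :
    ∃ l, Tendsto (fun X => smoothedLog χ X s) atTop (𝓝 l) := by
  obtain ⟨K, r, hr, -, hK⟩ := exists_norm_smoothedLog_sub_le hRH hχ hs
  refine cauchy_map_iff_exists_tendsto.1 (Metric.cauchySeq_iff'.2 fun ε hε => ?_)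
  have hlim : Tendsto (fun X : ℝ => K / X) atTop (𝓝 0) := tendsto_const_nhds.div_atTop tendsto_id
  obtain ⟨X, hX, hX1⟩ := ((hlim.eventually (gt_mem_nhds hε)).and (eventually_ge_atTop 1)).exists
  exact ⟨X, fun X' hX' => (dist_eq_norm _ _).trans_lt
    ((hK s (Metric.mem_ball_self hr) X X' hX1 hX').trans_lt hX)⟩

lemma exists_tendstoLocallyUniformlyOn_smoothedLog (hRH : dirichletRH χ) (hχ : χ ≠ 1) :
    ∃ F : ℂ → ℂ, TendstoLocallyUniformlyOn (smoothedLog χ) F atTop {z | 1 / 2 < z.re} := by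
  choose! F hF using fun (z : ℂ) (hz : 1 / 2 < z.re) => exists_tendsto_smoothedLog hRH hχ hz
  refine ⟨F, Metric.tendstoLocallyUniformlyOn_iff.2 fun ε hε c hc => ?_⟩
  obtain ⟨K, r, hr, hsub, hK⟩ := exists_norm_smoothedLog_sub_le hRH hχ hc
  refine ⟨Metric.ball c r, mem_nhdsWithin_of_mem_nhds (Metric.ball_mem_nhds c hr), ?_⟩
  have hlim : Tendsto (fun X : ℝ => K / X) atTop (𝓝 0) := tendsto_const_nhds.div_atTop tendsto_id
  filter_upwards [hlim.eventually (gt_mem_nhds hε), eventually_ge_atTop 1] with X hX hX1 z hz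
  rw [dist_eq_norm]
  refine lt_of_le_of_lt (le_of_tendsto ((hF z (hsub hz)).sub_const _).norm ?_) hX
  filter_upwards [eventually_ge_atTop X] with X' hX'
  exact hK z hz X X' hX1 hX'

lemma tendsto_re_smoothedLog (hRH : dirichletRH χ) (hχ : χ ≠ 1) (hs : 1 / 2 < s.re) :
    Tendsto (fun X => (smoothedLog χ X s).re) atTop (𝓝 (Real.log ‖LFunction χ s‖)) := by
  obtain ⟨F, hF⟩ := exists_tendstoLocallyUniformlyOn_smoothedLog hRH hχ
  have hdiff : DifferentiableOn ℂ F {z | 1 / 2 < z.re} := by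
    refine hF.differentiableOn ?_ isOpen_half_lt_re
    filter_upwards [eventually_gt_atTop 0] with X hX
    exact (differentiable_smoothedLog χ hX).differentiableOn
  have hexp : Set.EqOn (fun z => Complex.exp (F z)) (LFunction χ) {z | 1 / 2 < z.re} := by
    refine AnalyticOnNhd.eqOn_of_preconnected_of_eventuallyEq
      (hdiff.cexp.analyticOnNhd isOpen_half_lt_re)
      ((differentiable_LFunction hχ).differentiableOn.analyticOnNhd isOpen_half_lt_re)
      (convex_halfSpace_re_gt (1 / 2)).isPreconnected (z₀ := 2) (by norm_num) ?_
    have hnhds : {z : ℂ | 1 < z.re} ∈ 𝓝 2 :=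
      (isOpen_lt continuous_const Complex.continuous_re).mem_nhds (by simp)
    filter_upwards [hnhds] with z hz
    have hz' : 1 / 2 < z.re := one_half_lt_one.trans hz
    have : F z = LSeries (logLCoeff χ) z :=
      tendsto_nhds_unique (hF.tendsto_at hz') (tendsto_smoothedLog χ hz)
    rw [this, exp_LSeries_logLCoeff χ hz]
  rw [← hexp hs, Complex.norm_exp, Real.log_exp]
  exact (Complex.continuous_re.tendsto _).comp (hF.tendsto_at hs)

lemma log_norm_LFunction_le (hχ : χ.IsPrimitive) (hχ1 : χ ≠ 1) (hRH : dirichletRH χ) {X : ℝ}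
    (hX : Real.log 2 ≤ X) (hs : 1 / 2 < s.re) :
    Real.log ‖LFunction χ s‖
      ≤ (smoothedLog χ X s).re + 2 * (smoothingConst * Real.log (q * ‖s + 2‖)) / X := by
  have hX0 : 0 < X := (Real.log_pos one_lt_two).trans_le hX
  have hQ : 0 ≤ smoothingConst * Real.log (q * ‖s + 2‖) :=
    mul_nonneg (zero_le_one.trans one_le_smoothingConst)
      (zero_le_one.trans (one_le_log_mul_norm hχ1 (by linarith)))
  refine le_of_tendsto (tendsto_re_smoothedLog hRH hχ1 hs) ?_
  filter_upwards [eventually_ge_atTop X] with X' hX'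
  rw [← sub_le_iff_le_add']
  exact re_smoothedLog_sub_le hX0 hX' hQ fun Y hY =>
    re_weightedLSeries_twistedVonMangoldt_le hχ hχ1 hRH (hX.trans hY) hs

end SmoothedLog

/-! ### Even moments of short prime sums over all characters -/

section Orthogonality

variable {q : ℕ}

lemma conj_apply_of_isUnit (χ : DirichletCharacter ℂ q) {v : ZMod q} (hv : IsUnit v) :
    (starRingEnd ℂ) (χ v) = χ v⁻¹ := by
  have hmul : χ v⁻¹ * χ v = 1 := by rw [← map_mul, ZMod.inv_mul_of_unit _ hv, map_one]
  have hnorm : ‖χ v‖ = 1 := by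
    obtain ⟨w, rfl⟩ := hv
    exact χ.unit_norm_eq_one w
  rw [← Complex.inv_eq_conj hnorm, ← eq_inv_of_mul_eq_one_left hmul]

variable [NeZero q] {ι : Type*}

lemma sum_norm_sum_mul_apply_sq {K : Finset ι} (c : ι → ℂ) {u : ι → ZMod q}
    (hu : Set.InjOn u K) (hunit : ∀ i ∈ K, IsUnit (u i)) :
    ∑ χ : DirichletCharacter ℂ q, ‖∑ i ∈ K, c i * χ (u i)‖ ^ 2 =
      q.totient * ∑ i ∈ K, ‖c i‖ ^ 2 := by
  apply Complex.ofReal_injective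
  push_cast
  calc ∑ χ : DirichletCharacter ℂ q, (‖∑ i ∈ K, c i * χ (u i)‖ : ℂ) ^ 2
    _ = ∑ χ : DirichletCharacter ℂ q, ∑ i ∈ K, ∑ j ∈ K,
          (starRingEnd ℂ) (c i) * c j * (χ (u i)⁻¹ * χ (u j)) := by
        refine sum_congr rfl fun χ _ => ?_
        rw [← Complex.conj_mul', map_sum, sum_mul_sum]
        refine sum_congr rfl fun i hi => sum_congr rfl fun j _ => ?_
        rw [map_mul, conj_apply_of_isUnit χ (hunit i hi)]
        ring
    _ = ∑ i ∈ K, ∑ j ∈ K, (starRingEnd ℂ) (c i) * c j *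
          ∑ χ : DirichletCharacter ℂ q, χ (u i)⁻¹ * χ (u j) := by
        simp only [mul_sum]
        rw [sum_comm]
        exact sum_congr rfl fun i _ => sum_comm
    _ = ∑ i ∈ K, (q.totient : ℂ) * (‖c i‖ : ℂ) ^ 2 := by
        refine sum_congr rfl fun i hi => ?_
        rw [sum_eq_single_of_mem i hi, sum_char_inv_mul_char_eq ℂ (hunit i hi), if_pos rfl,
          Complex.conj_mul', mul_comm]
        intro j hj hji
        rw [sum_char_inv_mul_char_eq ℂ (hunit i hi), if_neg fun h => hji (hu hj hi h.symm),
          mul_zero]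
    _ = q.totient * ∑ i ∈ K, (‖c i‖ : ℂ) ^ 2 := (mul_sum ..).symm

lemma sum_norm_sum_mul_apply_sq_le {K : Finset ι} (c : ι → ℂ) {u : ι → ZMod q}
    (hu : Set.InjOn u K) :
    ∑ χ : DirichletCharacter ℂ q, ‖∑ i ∈ K, c i * χ (u i)‖ ^ 2 ≤
      q.totient * ∑ i ∈ K, ‖c i‖ ^ 2 := by
  classical
  have hfilter (χ : DirichletCharacter ℂ q) :
      ∑ i ∈ K, c i * χ (u i) = ∑ i ∈ K with IsUnit (u i), c i * χ (u i) := by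
    refine (sum_filter_of_ne fun i _ hi => ?_).symm
    by_contra hunit
    exact hi (by rw [χ.map_nonunit hunit, mul_zero])
  simp only [hfilter]
  rw [sum_norm_sum_mul_apply_sq c (hu.mono (filter_subset _ K)) fun i hi => (mem_filter.1 hi).2]
  gcongr
  exact filter_subset _ _

end Orthogonality

section PrimeSums

variable {P : Finset ℕ} {r : ℕ} {x : ℝ}

lemma prod_pow_injOn_piAntidiag (hP : ∀ p ∈ P, p.Prime) :
    Set.InjOn (fun k : ℕ → ℕ => ∏ p ∈ P, p ^ k p) (P.piAntidiag r) := by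
  have hfactor (k : ℕ → ℕ) {p : ℕ} (hp : p ∈ P) : (∏ p ∈ P, p ^ k p).factorization p = k p := by
    rw [Nat.factorization_prod fun p hp => pow_ne_zero _ (hP p hp).ne_zero,
      Finsupp.finsetSum_apply, sum_eq_single_of_mem p hp]
    · simp [(hP p hp).factorization_self]
    · intro l hl hlp
      simp [(hP l hl).factorization, hlp]
  intro k hk l hl hkl
  ext p
  by_cases hp : p ∈ P
  · rw [← hfactor k hp, ← hfactor l hp]
    exact congrArg (fun n => n.factorization p) hkl
  · rw [not_imp_comm.1 ((mem_piAntidiag.1 hk).2 p) hp,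
      not_imp_comm.1 ((mem_piAntidiag.1 hl).2 p) hp]

lemma prod_pow_le_pow_of_mem_piAntidiag (hPx : ∀ p ∈ P, (p : ℝ) ≤ x) {k : ℕ → ℕ}
    (hk : k ∈ P.piAntidiag r) : ((∏ p ∈ P, p ^ k p : ℕ) : ℝ) ≤ x ^ r := by
  push_cast
  calc ∏ p ∈ P, (p : ℝ) ^ k p
    _ ≤ ∏ p ∈ P, x ^ k p := by gcongr with p hp; exact hPx p hp
    _ = x ^ r := by rw [prod_pow_eq_pow_sum, (mem_piAntidiag.1 hk).1]

lemma natCast_zmod_injOn_Icc (q : ℕ) : Set.InjOn (Nat.cast : ℕ → ZMod q) (Set.Icc 1 q) := by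
  rintro m ⟨hm, hmq⟩ n ⟨hn, hnq⟩ hmn
  have hmod : m - 1 ≡ n - 1 [MOD q] :=
    Nat.ModEq.add_right_cancel' 1 (by
      rwa [Nat.sub_add_cancel hm, Nat.sub_add_cancel hn, ← ZMod.natCast_eq_natCast_iff])
  have := hmod.eq_of_lt_of_lt (by omega) (by omega)
  omega

variable {q : ℕ}

lemma sum_mul_apply_pow (χ : DirichletCharacter ℂ q) (b : ℕ → ℂ) :
    (∑ p ∈ P, b p * χ p) ^ r = ∑ k ∈ P.piAntidiag r,
      (Nat.multinomial P k : ℂ) * (∏ p ∈ P, b p ^ k p) * χ ((∏ p ∈ P, p ^ k p : ℕ) : ZMod q) := by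
  rw [sum_pow_eq_sum_piAntidiag]
  refine sum_congr rfl fun k _ => ?_
  push_cast
  simp only [map_prod, map_pow, mul_pow, prod_mul_distrib, mul_assoc]

lemma sum_norm_multinomial_sq_le (b : ℕ → ℂ) :
    ∑ k ∈ P.piAntidiag r, ‖(Nat.multinomial P k : ℂ) * ∏ p ∈ P, b p ^ k p‖ ^ 2 ≤
      r.factorial * (∑ p ∈ P, ‖b p‖ ^ 2) ^ r := by
  rw [sum_pow_eq_sum_piAntidiag, mul_sum]
  refine sum_le_sum fun k hk => ?_
  have hmult : (Nat.multinomial P k : ℝ) ≤ r.factorial := by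
    rw [← (mem_piAntidiag.1 hk).1, ← Nat.multinomial_spec]
    exact_mod_cast Nat.le_mul_of_pos_left _ (prod_pos fun p _ => Nat.factorial_pos _)
  calc ‖(Nat.multinomial P k : ℂ) * ∏ p ∈ P, b p ^ k p‖ ^ 2
    _ = Nat.multinomial P k * (Nat.multinomial P k * ∏ p ∈ P, (‖b p‖ ^ 2) ^ k p) := by
        simp only [norm_mul, Complex.norm_natCast, norm_prod, norm_pow, pow_right_comm _ 2,
          prod_pow]
        ring
    _ ≤ r.factorial * (Nat.multinomial P k * ∏ p ∈ P, (‖b p‖ ^ 2) ^ k p) := by gcongr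

variable [NeZero q]

lemma sum_norm_sum_prime_mul_apply_pow_le (hP : ∀ p ∈ P, p.Prime) (hPx : ∀ p ∈ P, (p : ℝ) ≤ x)
    (hxq : x ^ r ≤ q) (b : ℕ → ℂ) :
    ∑ χ : DirichletCharacter ℂ q, ‖∑ p ∈ P, b p * χ p‖ ^ (2 * r) ≤
      q.totient * (r.factorial * (∑ p ∈ P, ‖b p‖ ^ 2) ^ r) := by
  have hinj : Set.InjOn (fun k : ℕ → ℕ => ((∏ p ∈ P, p ^ k p : ℕ) : ZMod q)) (P.piAntidiag r) := by
    refine (natCast_zmod_injOn_Icc q).comp (prod_pow_injOn_piAntidiag hP) fun k hk => ⟨?_, ?_⟩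
    · exact prod_pos fun p hp => pow_pos (hP p hp).pos _
    · exact_mod_cast (prod_pow_le_pow_of_mem_piAntidiag hPx hk).trans hxq
  calc ∑ χ : DirichletCharacter ℂ q, ‖∑ p ∈ P, b p * χ p‖ ^ (2 * r)
    _ = ∑ χ : DirichletCharacter ℂ q, ‖∑ k ∈ P.piAntidiag r, (Nat.multinomial P k : ℂ) *
          (∏ p ∈ P, b p ^ k p) * χ ((∏ p ∈ P, p ^ k p : ℕ) : ZMod q)‖ ^ 2 := by
        refine sum_congr rfl fun χ _ => ?_
        rw [mul_comm 2 r, pow_mul, ← norm_pow, sum_mul_apply_pow]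
    _ ≤ q.totient * ∑ k ∈ P.piAntidiag r, ‖(Nat.multinomial P k : ℂ) * ∏ p ∈ P, b p ^ k p‖ ^ 2 :=
        sum_norm_sum_mul_apply_sq_le _ hinj
    _ ≤ q.totient * (r.factorial * (∑ p ∈ P, ‖b p‖ ^ 2) ^ r) := by
        gcongr
        exact sum_norm_multinomial_sq_le b

end PrimeSums

/-! ### Sums over primes -/

section PrimeReciprocals

lemma re_riemannZeta_le {σ : ℝ} (hσ : 1 < σ) : (riemannZeta σ).re ≤ 1 + 1 / (σ - 1) := by
  have hreal : riemannZeta σ = ((∑' n : ℕ, 1 / ((n : ℝ) + 1) ^ σ : ℝ) : ℂ) := by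
    rw [zeta_eq_tsum_one_div_nat_add_one_cpow (by simpa using hσ), Complex.ofReal_tsum]
    refine tsum_congr fun n => ?_
    rw [ofReal_div, Complex.ofReal_cpow (by positivity)]
    push_cast
    rfl
  have hsub := ZetaAsymptotics.zeta_limit_aux1 hσ
  have hterm : 0 ≤ σ * ZetaAsymptotics.termTSum σ :=
    mul_nonneg (by linarith) (tsum_nonneg fun n => ZetaAsymptotics.term_nonneg _ _)
  rw [hreal, Complex.ofReal_re]
  linarith

lemma vonMangoldt_div_rpow_mul_log_le (n : ℕ) (σ : ℝ) :
    ArithmeticFunction.vonMangoldt n / ((n : ℝ) ^ σ * Real.log n) ≤ ((n : ℝ) ^ σ)⁻¹ := by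
  rw [mul_comm, ← div_div, div_eq_mul_inv _ ((n : ℝ) ^ σ)]
  exact mul_le_of_le_one_left (by positivity)
    (div_le_one_of_le₀ ArithmeticFunction.vonMangoldt_le_log (Real.log_natCast_nonneg n))

variable {P : Finset ℕ}

lemma sum_prime_rpow_neg_le (hP : ∀ p ∈ P, p.Prime) {σ : ℝ} (hσ : 1 < σ) :
    ∑ p ∈ P, (p : ℝ) ^ (-σ) ≤ Real.log (1 + 1 / (σ - 1)) := by
  have hnonneg (n : ℕ) : 0 ≤ ArithmeticFunction.vonMangoldt n / ((n : ℝ) ^ σ * Real.log n) :=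
    div_nonneg ArithmeticFunction.vonMangoldt_nonneg
      (mul_nonneg (by positivity) (Real.log_natCast_nonneg n))
  have hsum : Summable fun n : ℕ =>
      ArithmeticFunction.vonMangoldt n / ((n : ℝ) ^ σ * Real.log n) :=
    (Real.summable_nat_rpow_inv.2 hσ).of_nonneg_of_le hnonneg
      (vonMangoldt_div_rpow_mul_log_le · σ)
  calc ∑ p ∈ P, (p : ℝ) ^ (-σ)
    _ = ∑ p ∈ P, ArithmeticFunction.vonMangoldt p / ((p : ℝ) ^ σ * Real.log p) := by
        refine sum_congr rfl fun p hp => ?_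
        have hlog : Real.log p ≠ 0 := (Real.log_pos (by exact_mod_cast (hP p hp).one_lt)).ne'
        rw [ArithmeticFunction.vonMangoldt_apply_prime (hP p hp), div_mul_cancel_right₀ hlog,
          Real.rpow_neg (by positivity)]
    _ ≤ ∑' n : ℕ, ArithmeticFunction.vonMangoldt n / ((n : ℝ) ^ σ * Real.log n) :=
        hsum.sum_le_tsum _ fun n _ => hnonneg n
    _ = Real.log (riemannZeta σ).re := (log_riemannZeta_eq hσ).symm
    _ ≤ Real.log (1 + 1 / (σ - 1)) :=
        Real.log_le_log (riemannZeta_re_pos_of_one_lt hσ) (re_riemannZeta_le hσ)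

lemma sum_prime_inv_le (hP : ∀ p ∈ P, p.Prime) {x : ℝ} (hx : 1 < x) (hPx : ∀ p ∈ P, (p : ℝ) ≤ x) :
    ∑ p ∈ P, (p : ℝ)⁻¹ ≤ Real.exp 1 * Real.log (1 + Real.log x) := by
  have hlogx : 0 < Real.log x := Real.log_pos hx
  -- Shifting the exponent by `1 / log x` costs at most a factor `e` on `p ≤ x`.
  have hshift : ∀ p ∈ P, (p : ℝ)⁻¹ ≤ Real.exp 1 * (p : ℝ) ^ (-(1 + 1 / Real.log x)) := by
    intro p hp
    have hp0 : (0 : ℝ) < p := by exact_mod_cast (hP p hp).pos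
    calc (p : ℝ)⁻¹
      _ = (p : ℝ) ^ (1 / Real.log x) * (p : ℝ) ^ (-(1 + 1 / Real.log x)) := by
          rw [← Real.rpow_add hp0, ← Real.rpow_neg_one]
          ring_nf
      _ ≤ Real.exp 1 * (p : ℝ) ^ (-(1 + 1 / Real.log x)) := by
          gcongr
          rw [Real.rpow_def_of_pos hp0, mul_one_div]
          exact Real.exp_le_exp.2 (div_le_one_of_le₀ (Real.log_le_log hp0 (hPx p hp)) hlogx.le)
  calc ∑ p ∈ P, (p : ℝ)⁻¹
    _ ≤ Real.exp 1 * ∑ p ∈ P, (p : ℝ) ^ (-(1 + 1 / Real.log x)) := by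
        rw [mul_sum]
        exact sum_le_sum hshift
    _ ≤ Real.exp 1 * Real.log (1 + Real.log x) := by
        gcongr
        refine (sum_prime_rpow_neg_le hP (by linarith [one_div_pos.2 hlogx])).trans_eq ?_
        rw [add_sub_cancel_left, one_div_one_div]

end PrimeReciprocals

section MomentScale

/-- The quantity `min {log y + 1, log q}` a power of which bounds the moments. -/
noncomputable def momentScale (y : ℝ) (q : ℕ) : ℝ := min (Real.log y + 1) (Real.log q)

variable {q : ℕ} {y : ℝ}

lemma log_three_le_momentScale (hq : 3 ≤ q) (hy : 2 ≤ y) : Real.log 3 ≤ momentScale y q := by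
  refine le_min ?_ (Real.log_le_log (by norm_num) (by exact_mod_cast hq))
  have : Real.log 2 ≤ Real.log y := Real.log_le_log (by norm_num) hy
  linarith [Real.log_two_gt_d9, Real.log_three_lt_d9]

lemma one_lt_log_three : 1 < Real.log 3 := by linarith [Real.log_three_gt_d9]

lemma one_lt_momentScale (hq : 3 ≤ q) (hy : 2 ≤ y) : 1 < momentScale y q :=
  one_lt_log_three.trans_le (log_three_le_momentScale hq hy)

lemma log_one_add_le {L : ℝ} (hL : Real.log 3 ≤ L) : Real.log (1 + L) ≤ 9 * Real.log L := by
  have hL' : (1.098 : ℝ) ≤ L := by linarith [Real.log_three_gt_d9]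
  have hpow : (2 : ℝ) ≤ L ^ 8 := by
    calc (2 : ℝ) ≤ 1.098 ^ 8 := by norm_num
      _ ≤ L ^ 8 := by gcongr
  calc Real.log (1 + L) ≤ Real.log (L ^ 9) := Real.log_le_log (by linarith) (by nlinarith)
    _ = 9 * Real.log L := by rw [Real.log_pow]; norm_num

lemma sum_prime_rpow_neg_le_log_momentScale {P : Finset ℕ} (hq : 3 ≤ q) (hy : 2 ≤ y)
    (hP : ∀ p ∈ P, p.Prime) (hPq : ∀ p ∈ P, (p : ℝ) ≤ q) :
    ∑ p ∈ P, (p : ℝ) ^ (-(1 + 2 / Real.log y)) ≤ 25 * Real.log (momentScale y q) := by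
  have hlogy : 0 < Real.log y := Real.log_pos (by linarith)
  have hlogq : Real.log 3 ≤ Real.log q := Real.log_le_log (by norm_num) (by exact_mod_cast hq)
  have hpos : 0 < Real.log (momentScale y q) := Real.log_pos (one_lt_momentScale hq hy)
  rcases min_choice (Real.log y + 1) (Real.log q) with hmin | hmin <;>
    rw [momentScale, hmin] at hpos ⊢
  · calc ∑ p ∈ P, (p : ℝ) ^ (-(1 + 2 / Real.log y))
      _ ≤ Real.log (1 + Real.log y / 2) := by
          refine (sum_prime_rpow_neg_le hP (by linarith [div_pos two_pos hlogy])).trans_eq ?_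
          rw [add_sub_cancel_left, one_div_div]
      _ ≤ Real.log (Real.log y + 1) := Real.log_le_log (by positivity) (by linarith)
      _ ≤ 25 * Real.log (Real.log y + 1) := by linarith
  · calc ∑ p ∈ P, (p : ℝ) ^ (-(1 + 2 / Real.log y))
      _ ≤ ∑ p ∈ P, (p : ℝ)⁻¹ := by
          refine sum_le_sum fun p hp => ?_
          rw [← Real.rpow_neg_one]
          exact Real.rpow_le_rpow_of_exponent_le (by exact_mod_cast (hP p hp).one_le)
            (by linarith [div_pos two_pos hlogy])
      _ ≤ Real.exp 1 * Real.log (1 + Real.log q) :=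
          sum_prime_inv_le hP (by exact_mod_cast (by omega : 1 < q)) hPq
      _ ≤ Real.exp 1 * (9 * Real.log (Real.log q)) := by
          gcongr
          exact log_one_add_le hlogq
      _ ≤ 25 * Real.log (Real.log q) := by nlinarith [Real.exp_one_lt_d9]

end MomentScale

/-! ### Prime powers -/

section PrimePowers

lemma sum_not_prime_le_sum_prime_pow {F : ℕ → ℝ} (hF : ∀ n, 0 ≤ F n)
    (hF0 : ∀ n, ¬ IsPrimePow n → F n = 0) (N : ℕ) :
    ∑ n ∈ range N with ¬ n.Prime, F n ≤
      ∑ p ∈ N.primesBelow, ∑ k ∈ range N, F (p ^ (k + 2)) := by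
  have hsubset : {n ∈ range N | ¬ n.Prime ∧ IsPrimePow n} ⊆
      (N.primesBelow ×ˢ range N).image fun a => a.1 ^ (a.2 + 2) := by
    intro n hn
    obtain ⟨hnN, hprime, hpow⟩ := mem_filter.1 hn
    obtain ⟨p, k, hp, hk, rfl⟩ := (isPrimePow_nat_iff n).1 hpow
    have hk2 : 2 ≤ k := by
      by_contra! hlt
      obtain rfl : k = 1 := by omega
      exact hprime (by rwa [pow_one])
    have hpN : p < N := (Nat.le_self_pow hk.ne' p).trans_lt (mem_range.1 hnN)
    have hkN : k < N := (Nat.lt_pow_self hp.one_lt).trans (mem_range.1 hnN)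
    refine mem_image.2 ⟨(p, k - 2), mem_product.2 ⟨Nat.mem_primesBelow.2 ⟨hpN, hp⟩, ?_⟩, ?_⟩
    · exact mem_range.2 (by dsimp only; omega)
    · dsimp only
      rw [Nat.sub_add_cancel hk2]
  calc ∑ n ∈ range N with ¬ n.Prime, F n
    _ = ∑ n ∈ range N with ¬ n.Prime ∧ IsPrimePow n, F n := by
        rw [← filter_filter]
        refine (sum_filter_of_ne fun n _ hn => ?_).symm
        exact not_imp_comm.1 (hF0 n) hn
    _ ≤ ∑ n ∈ (N.primesBelow ×ˢ range N).image fun a => a.1 ^ (a.2 + 2), F n :=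
        sum_le_sum_of_subset_of_nonneg hsubset fun n _ _ => hF n
    _ ≤ ∑ a ∈ N.primesBelow ×ˢ range N, F (a.1 ^ (a.2 + 2)) :=
        sum_image_le_of_nonneg fun n _ => hF n
    _ = ∑ p ∈ N.primesBelow, ∑ k ∈ range N, F (p ^ (k + 2)) := sum_product ..

lemma sum_range_pow_add_two_le {ρ : ℝ} (hρ : 0 ≤ ρ) (hρ' : ρ ≤ 3 / 4) (N : ℕ) :
    ∑ k ∈ range N, ρ ^ (k + 2) ≤ 4 * ρ ^ 2 := by
  have hgeom : ∑ k ∈ range N, ρ ^ k ≤ 4 := by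
    rw [range_eq_Ico]
    refine (geom_sum_Ico_le_of_lt_one hρ (by linarith)).trans ?_
    rw [pow_zero, div_le_iff₀ (by linarith)]
    linarith
  simp only [pow_add, ← sum_mul]
  gcongr

lemma prime_rpow_neg_le {p : ℕ} (hp : p.Prime) {σ : ℝ} (hσ : 1 / 2 ≤ σ) :
    (p : ℝ) ^ (-σ) ≤ 3 / 4 := by
  have hp2 : (2 : ℝ) ≤ p := by exact_mod_cast hp.two_le
  calc (p : ℝ) ^ (-σ)
    _ ≤ (p : ℝ) ^ (-(1 / 2) : ℝ) :=
        Real.rpow_le_rpow_of_exponent_le (by linarith) (by linarith)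
    _ ≤ (2 : ℝ) ^ (-(1 / 2) : ℝ) := Real.rpow_le_rpow_of_nonpos two_pos hp2 (by norm_num)
    _ = (√2)⁻¹ := by rw [Real.rpow_neg two_pos.le, Real.sqrt_eq_rpow]
    _ ≤ 3 / 4 := by
        rw [inv_le_comm₀ (by positivity) (by norm_num)]
        exact Real.le_sqrt_of_sq_le (by norm_num)

variable {q : ℕ} {χ : DirichletCharacter ℂ q} {s : ℂ}

lemma term_logLCoeff_of_not_isPrimePow {n : ℕ} (hn : ¬ IsPrimePow n) :
    LSeries.term (logLCoeff χ) s n = 0 := by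
  have : logLCoeff χ n = 0 := by
    simp [logLCoeff, ArithmeticFunction.vonMangoldt_eq_zero_iff.2 hn]
  simp [LSeries.term, this]

lemma term_logLCoeff_prime {p : ℕ} (hp : p.Prime) :
    LSeries.term (logLCoeff χ) s p = (p : ℂ) ^ (-s) * χ p := by
  have hlog : ((Real.log p : ℝ) : ℂ) ≠ 0 :=
    ofReal_ne_zero.2 (Real.log_pos (by exact_mod_cast hp.one_lt)).ne'
  rw [LSeries.term_of_ne_zero hp.ne_zero, logLCoeff, ArithmeticFunction.vonMangoldt_apply_prime hp,
    mul_div_cancel_right₀ _ hlog, Complex.cpow_neg, div_eq_inv_mul]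

lemma norm_logLCoeff_prime_pow_le {p k : ℕ} (hp : p.Prime) (hk : k ≠ 0) :
    ‖logLCoeff χ (p ^ k)‖ ≤ 1 / k := by
  have hlog : 0 < Real.log p := Real.log_pos (by exact_mod_cast hp.one_lt)
  have : (0 : ℝ) < k := by exact_mod_cast Nat.pos_of_ne_zero hk
  rw [logLCoeff, ArithmeticFunction.vonMangoldt_apply_pow hk,
    ArithmeticFunction.vonMangoldt_apply_prime hp, Nat.cast_pow (α := ℝ), Real.log_pow,
    norm_div, norm_mul, Complex.norm_real, Complex.norm_real, Real.norm_of_nonneg hlog.le,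
    Real.norm_of_nonneg (by positivity), mul_div_mul_right _ _ hlog.ne']
  gcongr
  exact χ.norm_le_one _

lemma norm_term_logLCoeff_prime_pow_le {p k : ℕ} (hp : p.Prime) (hk : 2 ≤ k) :
    ‖LSeries.term (logLCoeff χ) s (p ^ k)‖ ≤ 1 / 2 * ((p : ℝ) ^ (-s.re)) ^ k := by
  have hp0 : (0 : ℝ) < p := by exact_mod_cast hp.pos
  have hpk : p ^ k ≠ 0 := pow_ne_zero _ hp.ne_zero
  have hpow : ((p ^ k : ℕ) : ℝ) ^ s.re = (((p : ℝ) ^ (-s.re)) ^ k)⁻¹ := by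
    rw [Real.rpow_neg hp0.le, inv_pow, inv_inv, Real.rpow_pow_comm hp0.le, Nat.cast_pow]
  rw [LSeries.norm_term_eq, if_neg hpk, hpow, div_inv_eq_mul]
  gcongr
  refine (norm_logLCoeff_prime_pow_le hp (by omega)).trans ?_
  gcongr
  exact_mod_cast hk

lemma sum_not_prime_norm_term_logLCoeff_le (hs : 1 / 2 ≤ s.re) (N : ℕ) :
    ∑ n ∈ range N with ¬ n.Prime, ‖LSeries.term (logLCoeff χ) s n‖ ≤
      2 * ∑ p ∈ N.primesBelow, (p : ℝ) ^ (-(2 * s.re)) := by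
  refine (sum_not_prime_le_sum_prime_pow (fun _ => norm_nonneg _)
    (fun n hn => by rw [term_logLCoeff_of_not_isPrimePow hn, norm_zero]) N).trans ?_
  rw [mul_sum]
  refine sum_le_sum fun p hp => ?_
  have hprime := Nat.prime_of_mem_primesBelow hp
  calc ∑ k ∈ range N, ‖LSeries.term (logLCoeff χ) s (p ^ (k + 2))‖
    _ ≤ ∑ k ∈ range N, 1 / 2 * ((p : ℝ) ^ (-s.re)) ^ (k + 2) :=
        sum_le_sum fun k _ => norm_term_logLCoeff_prime_pow_le hprime (by omega)
    _ ≤ 1 / 2 * (4 * ((p : ℝ) ^ (-s.re)) ^ 2) := by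
        rw [← mul_sum]
        gcongr
        exact sum_range_pow_add_two_le (by positivity) (prime_rpow_neg_le hprime hs) N
    _ = 2 * (p : ℝ) ^ (-(2 * s.re)) := by
        rw [← Real.rpow_mul_natCast (by positivity)]
        push_cast
        ring_nf

end PrimePowers

section PrimePolynomial

/-- The coefficient of `χ(p)` in `smoothedLog χ X s`. -/
noncomputable def primeCoeff (X : ℝ) (s : ℂ) (p : ℕ) : ℂ :=
  (tent (Real.log p / X) ^ 2 : ℝ) * (p : ℂ) ^ (-s)

lemma norm_primeCoeff_le (X : ℝ) (s : ℂ) {p : ℕ} (hp : p ≠ 0) :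
    ‖primeCoeff X s p‖ ≤ (p : ℝ) ^ (-s.re) := by
  rw [primeCoeff, norm_mul, Complex.norm_real, Complex.norm_natCast_cpow_of_pos (by omega), neg_re]
  exact mul_le_of_le_one_left (by positivity) (norm_tent_sq_le_one _)

/-- The part of `smoothedLog χ X s` supported on primes. -/
noncomputable def primePolynomial {q : ℕ} (χ : DirichletCharacter ℂ q) (X : ℝ) (s : ℂ) : ℂ :=
  ∑ p ∈ Nat.primesBelow ⌈Real.exp X⌉₊, primeCoeff X s p * χ p

lemma le_exp_of_mem_primesBelow {X : ℝ} {p : ℕ} (hp : p ∈ Nat.primesBelow ⌈Real.exp X⌉₊) :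
    (p : ℝ) ≤ Real.exp X :=
  (Nat.lt_ceil.1 (Nat.lt_of_mem_primesBelow hp)).le

variable {q : ℕ} {χ : DirichletCharacter ℂ q} {s : ℂ} {X : ℝ}

lemma smoothedLog_eq_primePolynomial_add (hX : 0 < X) :
    smoothedLog χ X s = primePolynomial χ X s +
      ∑ n ∈ range ⌈Real.exp X⌉₊ with ¬ n.Prime,
        LSeries.term (logLCoeff χ) s n * (tent (Real.log n / X) ^ 2 : ℝ) := by
  rw [smoothedLog, weightedLSeries_eq_sum tent_sq_of_one_le hX (Nat.le_ceil _),
    ← sum_filter_add_sum_filter_not _ Nat.Prime, primePolynomial]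
  congr 1
  refine sum_congr rfl fun p hp => ?_
  rw [term_logLCoeff_prime (mem_filter.1 hp).2, primeCoeff]
  ring

lemma re_smoothedLog_le (hX : 0 < X) (hs : 1 / 2 ≤ s.re) :
    (smoothedLog χ X s).re ≤ ‖primePolynomial χ X s‖ +
      2 * ∑ p ∈ Nat.primesBelow ⌈Real.exp X⌉₊, (p : ℝ) ^ (-(2 * s.re)) := by
  refine (re_le_norm _).trans ?_
  rw [smoothedLog_eq_primePolynomial_add hX]
  refine (norm_add_le _ _).trans ?_
  gcongr
  refine ((norm_sum_le _ _).trans (sum_le_sum fun n _ => ?_)).trans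
    (sum_not_prime_norm_term_logLCoeff_le (χ := χ) hs _)
  rw [norm_mul, Complex.norm_real]
  exact mul_le_of_le_one_right (norm_nonneg _) (norm_tent_sq_le_one _)

end PrimePolynomial

/-! ### The frequency of large values -/

section LargeValues

variable {q : ℕ} {s : ℂ} {X y C : ℝ}

lemma half_lt_re (hy : 2 ≤ y) (hs : s.re = 1 / 2 + 1 / Real.log y) : 1 / 2 < s.re := by
  rw [hs]
  exact lt_add_of_pos_right _ (one_div_pos.2 (Real.log_pos (by linarith)))

lemma factorial_mul_pow_le {r : ℕ} {C l S V : ℝ} (hC : 1 ≤ C) (hl : 0 ≤ l) (hS : 0 ≤ S)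
    (hr : r ≤ V / (4 * C)) (hr' : V / (8 * C) ≤ r) (hV : Real.exp (8 * C * l) * S ≤ V) :
    r.factorial * S ^ r ≤ Real.exp (-(l * V)) * (V / 2) ^ (2 * r) := by
  have hV0 : 0 ≤ V := (by positivity : 0 ≤ Real.exp (8 * C * l) * S).trans hV
  have hrV : (r : ℝ) ≤ V / 4 := hr.trans (by gcongr; linarith)
  have hSV : S ≤ Real.exp (-(8 * C * l)) * V := by
    rwa [Real.exp_neg, ← div_eq_inv_mul, le_div_iff₀' (Real.exp_pos _)]
  calc r.factorial * S ^ r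
    _ ≤ (r : ℝ) ^ r * S ^ r := by gcongr; exact_mod_cast r.factorial_le_pow
    _ ≤ (V / 4) ^ r * (Real.exp (-(8 * C * l)) * V) ^ r := by gcongr
    _ = Real.exp (-(8 * C * l)) ^ r * (V / 2) ^ (2 * r) := by
        rw [pow_mul, ← mul_pow, ← mul_pow]
        ring
    _ ≤ Real.exp (-(l * V)) * (V / 2) ^ (2 * r) := by
        rw [← Real.exp_nat_mul]
        gcongr
        rw [div_le_iff₀ (by positivity)] at hr'
        nlinarith

lemma div_le_floor_div {C V : ℝ} (hC : 0 < C) (hV : 8 * C ≤ V) :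
    V / (8 * C) ≤ ⌊V / (4 * C)⌋₊ := by
  have hone : 1 ≤ V / (8 * C) := by rwa [one_le_div (by positivity)]
  have hhalf : V / (4 * C) = 2 * (V / (8 * C)) := by
    field_simp
    ring
  linarith [Nat.lt_floor_add_one (V / (4 * C))]

lemma sum_prime_rpow_neg_two_mul_re_le (hq : 3 ≤ q) (hy : 2 ≤ y)
    (hs : s.re = 1 / 2 + 1 / Real.log y) (hX : X ≤ Real.log q) :
    ∑ p ∈ Nat.primesBelow ⌈Real.exp X⌉₊, (p : ℝ) ^ (-(2 * s.re)) ≤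
      25 * Real.log (momentScale y q) := by
  have hXq : Real.exp X ≤ q := (Real.le_log_iff_exp_le (by positivity)).1 hX
  rw [show 2 * s.re = 1 + 2 / Real.log y by rw [hs]; ring]
  exact sum_prime_rpow_neg_le_log_momentScale hq hy
    (fun p hp => Nat.prime_of_mem_primesBelow hp)
    fun p hp => (le_exp_of_mem_primesBelow hp).trans hXq

lemma sum_norm_primeCoeff_sq_le (hq : 3 ≤ q) (hy : 2 ≤ y)
    (hs : s.re = 1 / 2 + 1 / Real.log y) (hX : X ≤ Real.log q) :
    ∑ p ∈ Nat.primesBelow ⌈Real.exp X⌉₊, ‖primeCoeff X s p‖ ^ 2 ≤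
      25 * Real.log (momentScale y q) := by
  refine le_trans (sum_le_sum fun p hp => ?_) (sum_prime_rpow_neg_two_mul_re_le hq hy hs hX)
  calc ‖primeCoeff X s p‖ ^ 2
    _ ≤ ((p : ℝ) ^ (-s.re)) ^ 2 := by
        gcongr
        exact norm_primeCoeff_le X s (Nat.prime_of_mem_primesBelow hp).ne_zero
    _ = (p : ℝ) ^ (-(2 * s.re)) := by
        rw [← Real.rpow_mul_natCast (by positivity)]
        push_cast
        ring_nf

variable [NeZero q] {χ : DirichletCharacter ℂ q}

lemma card_mul_pow_le_of_le_norm_sum {P : Finset ℕ} {r : ℕ} {x v S : ℝ} {b : ℕ → ℂ}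
    {H : Finset (DirichletCharacter ℂ q)} (hP : ∀ p ∈ P, p.Prime) (hPx : ∀ p ∈ P, (p : ℝ) ≤ x)
    (hxq : x ^ r ≤ q) (hv : 0 ≤ v) (hH : ∀ χ ∈ H, v ≤ ‖∑ p ∈ P, b p * χ p‖)
    (hS : ∑ p ∈ P, ‖b p‖ ^ 2 ≤ S) :
    #H * v ^ (2 * r) ≤ q.totient * (r.factorial * S ^ r) := by
  calc #H * v ^ (2 * r)
    _ = ∑ _ ∈ H, v ^ (2 * r) := by rw [sum_const, nsmul_eq_mul]
    _ ≤ ∑ χ ∈ H, ‖∑ p ∈ P, b p * χ p‖ ^ (2 * r) := by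
        gcongr with _ hχ
        exact hH _ hχ
    _ ≤ ∑ χ : DirichletCharacter ℂ q, ‖∑ p ∈ P, b p * χ p‖ ^ (2 * r) :=
        sum_le_sum_of_subset_of_nonneg (subset_univ _) fun _ _ _ => by positivity
    _ ≤ q.totient * (r.factorial * (∑ p ∈ P, ‖b p‖ ^ 2) ^ r) :=
        sum_norm_sum_prime_mul_apply_pow_le hP hPx hxq b
    _ ≤ q.totient * (r.factorial * S ^ r) := by gcongr

lemma log_norm_LFunction_le_norm_primePolynomial (hχ : χ.IsPrimitive) (hχ1 : χ ≠ 1)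
    (hRH : dirichletRH χ) (hX : Real.log 2 ≤ X) (hs : 1 / 2 < s.re)
    (hC : 2 * (smoothingConst * Real.log (q * ‖s + 2‖)) ≤ C * Real.log q) :
    Real.log ‖LFunction χ s‖ ≤ ‖primePolynomial χ X s‖ +
      2 * ∑ p ∈ Nat.primesBelow ⌈Real.exp X⌉₊, (p : ℝ) ^ (-(2 * s.re)) + C * Real.log q / X := by
  have hX0 : 0 < X := (Real.log_pos one_lt_two).trans_le hX
  calc Real.log ‖LFunction χ s‖
    _ ≤ (smoothedLog χ X s).re + 2 * (smoothingConst * Real.log (q * ‖s + 2‖)) / X :=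
        log_norm_LFunction_le hχ hχ1 hRH hX hs
    _ ≤ _ := by
        gcongr
        exact re_smoothedLog_le hX0 hs.le

lemma log_norm_LFunction_le_div_log_two (hχ : χ.IsPrimitive) (hχ1 : χ ≠ 1)
    (hRH : dirichletRH χ) (hs : 1 / 2 < s.re)
    (hC : 2 * (smoothingConst * Real.log (q * ‖s + 2‖)) ≤ C * Real.log q) :
    Real.log ‖LFunction χ s‖ ≤ C * Real.log q / Real.log 2 := by
  have hempty : Nat.primesBelow ⌈Real.exp (Real.log 2)⌉₊ = ∅ := by
    rw [Real.exp_log two_pos, Nat.ceil_ofNat, Nat.primesBelow_two]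
  simpa [primePolynomial, hempty] using
    log_norm_LFunction_le_norm_primePolynomial hχ hχ1 hRH le_rfl hs hC

lemma half_le_norm_primePolynomial {V : ℝ} (hq : 3 ≤ q) (hy : 2 ≤ y) (hχ : χ.IsPrimitive)
    (hRH : dirichletRH χ) (hs : s.re = 1 / 2 + 1 / Real.log y)
    (hC : 2 * (smoothingConst * Real.log (q * ‖s + 2‖)) ≤ C * Real.log q)
    (hX : Real.log 2 ≤ X) (hXq : X ≤ Real.log q) (hXV : C * Real.log q / X ≤ V / 4)
    (hV : 200 * Real.log (momentScale y q) ≤ V) (hlarge : V < Real.log ‖LFunction χ s‖) :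
    V / 2 ≤ ‖primePolynomial χ X s‖ := by
  have hlog := log_norm_LFunction_le_norm_primePolynomial hχ
    (ne_one_of_isPrimitive (by omega) hχ) hRH hX (half_lt_re hy hs) hC
  have hsum := sum_prime_rpow_neg_two_mul_re_le hq hy hs hXq
  linarith

lemma filter_log_norm_LFunction_eq_empty {V : ℝ} {G : Finset (DirichletCharacter ℂ q)}
    (hq : 3 ≤ q) (hG : ∀ χ ∈ G, χ.IsPrimitive) (hRH : ∀ χ ∈ G, dirichletRH χ)
    (hs : 1 / 2 < s.re) (hC : 2 * (smoothingConst * Real.log (q * ‖s + 2‖)) ≤ C * Real.log q)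
    (hV : C * Real.log q ≤ V * Real.log 2) :
    {χ ∈ G | V < Real.log ‖LFunction χ s‖} = ∅ := by
  refine filter_false_of_mem fun χ hχ => not_lt.2 ?_
  calc Real.log ‖LFunction χ s‖
    _ ≤ C * Real.log q / Real.log 2 :=
        log_norm_LFunction_le_div_log_two (hG χ hχ) (ne_one_of_isPrimitive (by omega) (hG χ hχ))
          (hRH χ hχ) hs hC
    _ ≤ V := (div_le_iff₀ (Real.log_pos one_lt_two)).2 hV

lemma card_large_values_mul_pow_le {V : ℝ} {r : ℕ} {G : Finset (DirichletCharacter ℂ q)}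
    (hq : 3 ≤ q) (hy : 2 ≤ y) (hG : ∀ χ ∈ G, χ.IsPrimitive) (hRH : ∀ χ ∈ G, dirichletRH χ)
    (hs : s.re = 1 / 2 + 1 / Real.log y)
    (hC : 2 * (smoothingConst * Real.log (q * ‖s + 2‖)) ≤ C * Real.log q)
    (hX : Real.log 2 ≤ X) (hXq : X ≤ Real.log q) (hXr : Real.exp X ^ r ≤ q)
    (hXV : C * Real.log q / X ≤ V / 4) (hV : 200 * Real.log (momentScale y q) ≤ V) :
    #{χ ∈ G | V < Real.log ‖LFunction χ s‖} * (V / 2) ^ (2 * r) ≤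
      q.totient * (r.factorial * (25 * Real.log (momentScale y q)) ^ r) := by
  have hscale : 0 < Real.log (momentScale y q) := Real.log_pos (one_lt_momentScale hq hy)
  refine card_mul_pow_le_of_le_norm_sum (fun p hp => Nat.prime_of_mem_primesBelow hp)
    (fun p => le_exp_of_mem_primesBelow) hXr (by linarith) (fun χ hχ => ?_)
    (sum_norm_primeCoeff_sq_le (s := s) hq hy hs hXq)
  obtain ⟨hχG, hlarge⟩ := mem_filter.1 hχ
  exact half_le_norm_primePolynomial hq hy (hG χ hχG) (hRH χ hχG) hs hC hX hXq hXV hV hlarge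

lemma card_large_values_le {l V : ℝ} {G : Finset (DirichletCharacter ℂ q)} (hq : 3 ≤ q)
    (hy : 2 ≤ y) (hG : ∀ χ ∈ G, χ.IsPrimitive) (hRH : ∀ χ ∈ G, dirichletRH χ)
    (hs : s.re = 1 / 2 + 1 / Real.log y) (hC1 : 1 ≤ C)
    (hC : 2 * (smoothingConst * Real.log (q * ‖s + 2‖)) ≤ C * Real.log q) (hl : 1 ≤ l)
    (hV : 25 * Real.exp (8 * C * l) * Real.log (momentScale y q) + 8 * C ≤ V) :
    #{χ ∈ G | V < Real.log ‖LFunction χ s‖} ≤ q.totient * Real.exp (-(l * V)) := by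
  have hscale : 0 < Real.log (momentScale y q) := Real.log_pos (one_lt_momentScale hq hy)
  have hlogq : 0 < Real.log q := Real.log_pos (by exact_mod_cast (by omega : 1 < q))
  have hexp : 9 ≤ Real.exp (8 * C * l) := by nlinarith [Real.add_one_le_exp (8 * C * l)]
  have hEV : Real.exp (8 * C * l) * (25 * Real.log (momentScale y q)) ≤ V := by linarith
  have hV8 : 8 * C ≤ V := by nlinarith
  have hV0 : 0 < V := by linarith
  set X := 4 * C * Real.log q / V with hXdef
  rcases lt_or_ge X (Real.log 2) with hX | hX
  · rw [filter_log_norm_LFunction_eq_empty hq hG hRH (half_lt_re hy hs) hC, card_empty,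
      Nat.cast_zero]
    · positivity
    · rw [hXdef, div_lt_iff₀ hV0] at hX
      nlinarith
  have hXq : X ≤ Real.log q := by
    rw [hXdef, div_le_iff₀ hV0]
    nlinarith
  set r := ⌊V / (4 * C)⌋₊
  have hr : (r : ℝ) ≤ V / (4 * C) := Nat.floor_le (by positivity)
  have hr' : V / (8 * C) ≤ r := div_le_floor_div (by positivity) hV8
  have hXr : Real.exp X ^ r ≤ q := by
    rw [← Real.exp_nat_mul, ← Real.le_log_iff_exp_le (by positivity)]
    calc r * X ≤ V / (4 * C) * X := by gcongr
      _ = Real.log q := by rw [hXdef]; field_simp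
  have hXV : C * Real.log q / X = V / 4 := by rw [hXdef]; field_simp
  refine le_of_mul_le_mul_right ?_ (by positivity : 0 < (V / 2) ^ (2 * r))
  calc #{χ ∈ G | V < Real.log ‖LFunction χ s‖} * (V / 2) ^ (2 * r)
    _ ≤ q.totient * (r.factorial * (25 * Real.log (momentScale y q)) ^ r) :=
        card_large_values_mul_pow_le hq hy hG hRH hs hC hX hXq hXr hXV.le (by nlinarith)
    _ ≤ q.totient * (Real.exp (-(l * V)) * (V / 2) ^ (2 * r)) := by
        refine mul_le_mul_of_nonneg_left ?_ (Nat.cast_nonneg _)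
        exact factorial_mul_pow_le hC1 (by linarith) (by positivity) hr hr' hEV
    _ = q.totient * Real.exp (-(l * V)) * (V / 2) ^ (2 * r) := (mul_assoc ..).symm

end LargeValues

/-! ### From large values to moments -/

section LayerCake

variable {ι : Type*} {κ V₀ Φ : ℝ}

lemma sum_range_exp_neg_one_pow_le_two (J : ℕ) : ∑ j ∈ range J, Real.exp (-1) ^ j ≤ 2 := by
  have hexp : 2 ≤ Real.exp 1 := by linarith [Real.add_one_le_exp (1 : ℝ)]
  have hinv : Real.exp (-1) ≤ 1 / 2 := by
    rw [Real.exp_neg, ← one_div]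
    gcongr
  calc ∑ j ∈ range J, Real.exp (-1) ^ j
    _ ≤ ∑ j ∈ range J, (1 / (2 : ℝ)) ^ j := by gcongr
    _ ≤ 2 := sum_geometric_two_le J

lemma exp_mul_le_add_sum_ite (hκ : 0 ≤ κ) (V₀ : ℝ) {u : ℝ} {J : ℕ} (hJ : u - V₀ ≤ J) :
    Real.exp (κ * u) ≤ Real.exp (κ * V₀) +
      ∑ j ∈ range J, if V₀ + j < u then Real.exp (κ * (V₀ + j + 1)) else 0 := by
  have hterm (j : ℕ) : 0 ≤ if V₀ + j < u then Real.exp (κ * (V₀ + j + 1)) else 0 := by positivity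
  rcases le_or_gt u V₀ with hu | hu
  · exact le_add_of_le_of_nonneg (by gcongr) (sum_nonneg fun j _ => hterm j)
  obtain ⟨j, hj⟩ := Nat.exists_eq_add_one.2 (Nat.ceil_pos.2 (sub_pos.2 hu))
  have hju : V₀ + j < u := by
    have : (j : ℝ) < u - V₀ := Nat.lt_ceil.1 (by omega)
    linarith
  have huj : u ≤ V₀ + j + 1 := by
    have hceil := Nat.le_ceil (u - V₀)
    rw [hj] at hceil
    push_cast at hceil
    linarith
  have hjJ : j ∈ range J := by
    rw [mem_range]
    exact_mod_cast (by linarith : (j : ℝ) < J)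
  calc Real.exp (κ * u)
    _ ≤ if V₀ + j < u then Real.exp (κ * (V₀ + j + 1)) else 0 := by
        rw [if_pos hju]
        gcongr
    _ ≤ ∑ j ∈ range J, if V₀ + j < u then Real.exp (κ * (V₀ + j + 1)) else 0 :=
        single_le_sum (f := fun j : ℕ => if V₀ + j < u then Real.exp (κ * (V₀ + j + 1)) else 0)
          (fun j _ => hterm j) hjJ
    _ ≤ _ := le_add_of_nonneg_left (by positivity)

lemma sum_exp_mul_le {G : Finset ι} {u : ι → ℝ} (hκ : 0 ≤ κ) (hV₀ : 0 ≤ V₀) (hcard : #G ≤ Φ)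
    (htail : ∀ V, V₀ ≤ V → #{i ∈ G | V < u i} ≤ Φ * Real.exp (-((κ + 1) * V))) :
    ∑ i ∈ G, Real.exp (κ * u i) ≤ 3 * Φ * Real.exp (κ * (V₀ + 1)) := by
  have hΦ : 0 ≤ Φ := (Nat.cast_nonneg _).trans hcard
  obtain ⟨J, hJ⟩ : ∃ J : ℕ, ∀ i ∈ G, u i - V₀ ≤ J := by
    obtain ⟨M, hM⟩ := (G.image fun i => u i - V₀).bddAbove
    exact ⟨⌈M⌉₊, fun i hi => (hM (mem_image_of_mem _ hi)).trans (Nat.le_ceil M)⟩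
  have hlevel (j : ℕ) : #{i ∈ G | V₀ + j < u i} * Real.exp (κ * (V₀ + j + 1)) ≤
      Φ * Real.exp (κ * (V₀ + 1)) * Real.exp (-1) ^ j := by
    calc #{i ∈ G | V₀ + j < u i} * Real.exp (κ * (V₀ + j + 1))
      _ ≤ Φ * Real.exp (-((κ + 1) * (V₀ + j))) * Real.exp (κ * (V₀ + j + 1)) := by
          gcongr
          exact htail _ (le_add_of_nonneg_right j.cast_nonneg)
      _ = Φ * Real.exp (κ - V₀ - j) := by
          rw [mul_assoc, ← Real.exp_add]
          ring_nf
      _ ≤ Φ * Real.exp (κ * (V₀ + 1) + j * (-1)) := by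
          gcongr
          nlinarith
      _ = Φ * Real.exp (κ * (V₀ + 1)) * Real.exp (-1) ^ j := by
          rw [Real.exp_add, Real.exp_nat_mul, mul_assoc]
  calc ∑ i ∈ G, Real.exp (κ * u i)
    _ ≤ ∑ i ∈ G, (Real.exp (κ * V₀) +
          ∑ j ∈ range J, if V₀ + j < u i then Real.exp (κ * (V₀ + j + 1)) else 0) :=
        sum_le_sum fun i hi => exp_mul_le_add_sum_ite hκ V₀ (hJ i hi)
    _ = #G * Real.exp (κ * V₀) +
          ∑ j ∈ range J, #{i ∈ G | V₀ + j < u i} * Real.exp (κ * (V₀ + j + 1)) := by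
        rw [sum_add_distrib, sum_comm (s := G)]
        simp only [← sum_filter, sum_const, nsmul_eq_mul]
    _ ≤ Φ * Real.exp (κ * (V₀ + 1)) +
          ∑ j ∈ range J, Φ * Real.exp (κ * (V₀ + 1)) * Real.exp (-1) ^ j := by
        refine add_le_add ?_ (sum_le_sum fun j _ => hlevel j)
        gcongr
        linarith
    _ ≤ Φ * Real.exp (κ * (V₀ + 1)) + Φ * Real.exp (κ * (V₀ + 1)) * 2 := by
        rw [← mul_sum]
        gcongr
        exact sum_range_exp_neg_one_pow_le_two J
    _ = 3 * Φ * Real.exp (κ * (V₀ + 1)) := by ring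

lemma sum_prod_rpow_le {α : Type*} [Fintype ι] {G : Finset α} {f : ι → α → ℝ} {a : ι → ℝ} {R : ℝ}
    (hκ : 0 < κ) (ha : ∀ j, 0 ≤ a j) (hsum : ∑ j, a j = κ) (hf : ∀ j x, 0 ≤ f j x)
    (hR : ∀ j, ∑ x ∈ G, f j x ^ κ ≤ R) :
    ∑ x ∈ G, ∏ j, f j x ^ a j ≤ R := by
  have hw : ∑ j, a j / κ = 1 := by rw [← sum_div, hsum, div_self hκ.ne']
  calc ∑ x ∈ G, ∏ j, f j x ^ a j
    _ = ∑ x ∈ G, ∏ j, (f j x ^ κ) ^ (a j / κ) := by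
        simp_rw [← Real.rpow_mul (hf _ _), mul_div_cancel₀ _ hκ.ne']
    _ ≤ ∑ x ∈ G, ∑ j, a j / κ * f j x ^ κ := by
        gcongr with x
        exact Real.geom_mean_le_arith_mean_weighted _ _ _ (fun j _ => div_nonneg (ha j) hκ.le) hw
          fun j _ => Real.rpow_nonneg (hf j x) κ
    _ = ∑ j, a j / κ * ∑ x ∈ G, f j x ^ κ := by
        rw [sum_comm]
        simp_rw [mul_sum]
    _ ≤ ∑ j, a j / κ * R := by
        gcongr with j
        · exact div_nonneg (ha j) hκ.le
        · exact hR j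
    _ = R := by rw [← sum_mul, hw, one_mul]

end LayerCake

section Moments

variable {q : ℕ} {s : ℂ} {y A C κ : ℝ}

lemma log_mul_norm_add_two_le (hq : 3 ≤ q) (hA : 0 ≤ A) (hre₀ : 0 ≤ s.re) (hre : s.re ≤ 3)
    (him : |s.im| ≤ (q : ℝ) ^ A) :
    Real.log (q * ‖s + 2‖) ≤ (A + 3) * Real.log q := by
  have hq' : (3 : ℝ) ≤ q := by exact_mod_cast hq
  have hq0 : (0 : ℝ) < q := by linarith
  have hqA : 1 ≤ (q : ℝ) ^ A := Real.one_le_rpow (by linarith) hA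
  have hnorm : ‖s + 2‖ ≤ q ^ 2 * (q : ℝ) ^ A := by
    calc ‖s + 2‖
      _ ≤ |(s + 2).re| + |(s + 2).im| := Complex.norm_le_abs_re_add_abs_im _
      _ = s.re + 2 + |s.im| := by
          rw [add_re, add_im, re_ofNat, im_ofNat, add_zero, abs_of_nonneg (by linarith)]
      _ ≤ 9 * (q : ℝ) ^ A := by linarith
      _ ≤ q ^ 2 * (q : ℝ) ^ A := by
          gcongr
          nlinarith
  have hnorm0 : 0 < ‖s + 2‖ := norm_pos_iff.2 fun h => by
    have := congrArg Complex.re h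
    rw [add_re, re_ofNat, zero_re] at this
    linarith
  calc Real.log (q * ‖s + 2‖)
    _ ≤ Real.log ((q : ℝ) ^ (A + 3)) := by
        refine Real.log_le_log (by positivity) ?_
        rw [Real.rpow_add hq0, Real.rpow_ofNat]
        nlinarith
    _ = (A + 3) * Real.log q := Real.log_rpow hq0 _

lemma card_le_totient [NeZero q] (G : Finset (DirichletCharacter ℂ q)) : #G ≤ q.totient :=
  (card_le_univ G).trans_eq <| by
    rw [← Nat.card_eq_fintype_card, card_eq_totient_of_hasEnoughRootsOfUnity]

/-- A power of `min (log y + 1, log q)` that bounds the `κ`-th moment when the conductor term is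
`C * log q`. The quotient absorbs a constant factor, as that minimum is at least `log 3 > 1`. -/
noncomputable def momentExponent (C κ : ℝ) : ℝ :=
  κ * (25 * Real.exp (8 * C * (κ + 1))) +
    (Real.log 3 + κ * (8 * C + 1)) / Real.log (Real.log 3)

lemma momentExponent_pos (hC : 0 ≤ C) (hκ : 0 ≤ κ) : 0 < momentExponent C κ := by
  have : 0 < Real.log 3 := Real.log_pos (by norm_num)
  have : 0 < Real.log (Real.log 3) := Real.log_pos one_lt_log_three
  unfold momentExponent
  positivity

lemma three_mul_exp_le_momentScale_rpow (hq : 3 ≤ q) (hy : 2 ≤ y) (hC : 0 ≤ C) (hκ : 0 ≤ κ) :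
    3 * Real.exp (κ * (25 * Real.exp (8 * C * (κ + 1)) * Real.log (momentScale y q) +
      8 * C + 1)) ≤ momentScale y q ^ momentExponent C κ := by
  have h3 : 0 < Real.log 3 := Real.log_pos (by norm_num)
  have h33 : 0 < Real.log (Real.log 3) := Real.log_pos one_lt_log_three
  have hscale : Real.log (Real.log 3) ≤ Real.log (momentScale y q) :=
    Real.log_le_log h3 (log_three_le_momentScale hq hy)
  have hconst : Real.log 3 + κ * (8 * C + 1) ≤
      (Real.log 3 + κ * (8 * C + 1)) / Real.log (Real.log 3) * Real.log (momentScale y q) := by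
    rw [div_mul_eq_mul_div, le_div_iff₀ h33]
    gcongr
  rw [Real.rpow_def_of_pos (h3.trans_le (log_three_le_momentScale hq hy)), momentExponent]
  calc 3 * Real.exp (κ * (25 * Real.exp (8 * C * (κ + 1)) * Real.log (momentScale y q) +
        8 * C + 1))
    _ = Real.exp (Real.log 3 + κ * (25 * Real.exp (8 * C * (κ + 1)) *
          Real.log (momentScale y q) + 8 * C + 1)) := by
        rw [Real.exp_add, Real.exp_log three_pos]
    _ ≤ _ := by
        gcongr
        linarith

lemma sum_norm_LFunction_rpow_le [NeZero q] {G : Finset (DirichletCharacter ℂ q)} (hq : 3 ≤ q)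
    (hy : 2 ≤ y) (hG : ∀ χ ∈ G, χ.IsPrimitive) (hRH : ∀ χ ∈ G, dirichletRH χ)
    (hs : s.re = 1 / 2 + 1 / Real.log y) (hC1 : 1 ≤ C)
    (hC : 2 * (smoothingConst * Real.log (q * ‖s + 2‖)) ≤ C * Real.log q) (hκ : 0 ≤ κ) :
    ∑ χ ∈ G, ‖LFunction χ s‖ ^ κ ≤ q.totient * momentScale y q ^ momentExponent C κ := by
  have hscale : 0 < Real.log (momentScale y q) := Real.log_pos (one_lt_momentScale hq hy)
  have hpow (χ) (hχ : χ ∈ G) :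
      ‖LFunction χ s‖ ^ κ = Real.exp (κ * Real.log ‖LFunction χ s‖) := by
    have hχ1 : χ ≠ 1 := ne_one_of_isPrimitive (by omega) (hG χ hχ)
    have hne := LFunction_ne_zero_of_half_lt_re (hRH χ hχ) hχ1 (half_lt_re hy hs)
    rw [Real.rpow_def_of_pos (norm_pos_iff.2 hne), mul_comm]
  rw [sum_congr rfl hpow]
  calc ∑ χ ∈ G, Real.exp (κ * Real.log ‖LFunction χ s‖)
    _ ≤ 3 * q.totient * Real.exp (κ * (25 * Real.exp (8 * C * (κ + 1)) *
          Real.log (momentScale y q) + 8 * C + 1)) :=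
        sum_exp_mul_le hκ (by positivity) (mod_cast card_le_totient G) fun V hV =>
          card_large_values_le hq hy hG hRH hs hC1 hC (by linarith) hV
    _ = q.totient * (3 * Real.exp (κ * (25 * Real.exp (8 * C * (κ + 1)) *
          Real.log (momentScale y q) + 8 * C + 1))) := by ring
    _ ≤ q.totient * momentScale y q ^ momentExponent C κ := by
        gcongr
        exact three_mul_exp_le_momentScale_rpow hq hy (by linarith) hκ

lemma sum_prod_norm_LFunction_rpow_le {ι : Type*} [Fintype ι] [NeZero q]
    {G : Finset (DirichletCharacter ℂ q)} {a : ι → ℝ} {s : ι → ℂ} (hq : 3 ≤ q) (hy : 2 ≤ y)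
    (hG : ∀ χ ∈ G, χ.IsPrimitive) (hRH : ∀ χ ∈ G, dirichletRH χ)
    (hs : ∀ j, (s j).re = 1 / 2 + 1 / Real.log y) (him : ∀ j, |(s j).im| ≤ (q : ℝ) ^ A)
    (hA : 0 ≤ A) (hκ : 0 < κ) (ha : ∀ j, 0 ≤ a j) (hsum : ∑ j, a j = κ) :
    ∑ χ ∈ G, ∏ j, ‖LFunction χ (s j)‖ ^ a j ≤
      q.totient * momentScale y q ^ momentExponent (2 * smoothingConst * (A + 3)) κ := by
  have hC1 : 1 ≤ 2 * smoothingConst * (A + 3) := by nlinarith [one_le_smoothingConst]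
  refine sum_prod_rpow_le hκ ha hsum (fun _ _ => norm_nonneg _) fun j => ?_
  refine sum_norm_LFunction_rpow_le hq hy hG hRH (hs j) hC1 ?_ hκ.le
  have hre : (s j).re ≤ 3 := by
    have hlog : Real.log 2 ≤ Real.log y := Real.log_le_log two_pos hy
    have hinv : 1 / Real.log y ≤ 2 := by
      rw [div_le_iff₀ (by linarith [Real.log_two_gt_d9])]
      linarith [Real.log_two_gt_d9]
    linarith [hs j]
  have hcond := log_mul_norm_add_two_le hq hA (by linarith [half_lt_re hy (hs j)]) hre (him j)
  calc 2 * (smoothingConst * Real.log (q * ‖s j + 2‖))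
    _ ≤ 2 * (smoothingConst * ((A + 3) * Real.log q)) := by
        gcongr
        linarith [one_le_smoothingConst]
    _ = 2 * smoothingConst * (A + 3) * Real.log q := by ring

lemma not_isPrimitive_of_level_two (χ : DirichletCharacter ℂ 2) : ¬ χ.IsPrimitive := by
  have hχ1 : χ = 1 := MulChar.ext fun u => by rw [Subsingleton.elim u 1]; simp
  exact fun hχ => ne_one_of_isPrimitive (by decide) hχ hχ1

end Moments

end DirichletMoments

open Classical DirichletMoments in
theorem stmt5_general {A κ : ℝ} (hA : 0 ≤ A) (hκ : 0 < κ) :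
    ∃ B : ℝ, 0 < B ∧ ∀ {ι : Type*} [Fintype ι] (a : ι → ℝ), (∀ j, 0 ≤ a j) → ∑ j, a j = κ →
      ∀ (q : ℕ) [NeZero q], 1 < q →
      (∀ χ : DirichletCharacter ℂ q, χ.IsPrimitive → dirichletRH χ) →
      ∀ y : ℝ, 2 ≤ y →
      ∀ t : ι → ℝ, (∀ j, |t j| ≤ (q : ℝ) ^ A) →
      ∑ χ ∈ Finset.univ.filter (fun χ : DirichletCharacter ℂ q => χ.IsPrimitive),
        ∏ j, ‖
          (DirichletCharacter.LFunction χ (1 / 2 + 1 / Real.log y + (t j) * Complex.I))‖ ^ (a j)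
      ≤ (Nat.totient q) * (min (Real.log y + 1) (Real.log q)) ^ B := by
  have hC : 0 ≤ 2 * smoothingConst * (A + 3) := by nlinarith [one_le_smoothingConst]
  refine ⟨momentExponent (2 * smoothingConst * (A + 3)) κ, momentExponent_pos hC hκ.le, ?_⟩
  intro ι _ a ha hsum q _ hq hRH y hy t ht
  obtain rfl | hq : q = 2 ∨ 3 ≤ q := by omega
  · have : 0 ≤ Real.log y := Real.log_nonneg (by linarith)
    simp only [not_isPrimitive_of_level_two, filter_false, sum_empty]
    positivity
  have hs (j) : 1 / 2 + 1 / (Real.log y : ℂ) + t j * Complex.I =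
      ⟨1 / 2 + 1 / Real.log y, t j⟩ := by
    apply Complex.ext <;> simp
  simp only [hs]
  exact sum_prod_norm_LFunction_rpow_le hq hy (fun χ hχ => (mem_filter.1 hχ).2)
    (fun χ hχ => hRH χ (mem_filter.1 hχ).2) (fun _ => rfl) ht hA hκ ha hsum

open Classical in
theorem stmt5 (k : ℕ) (hk : 0 < k) (a : Fin (2 * k) → ℝ) (A : ℝ)
    (ha : ∀ j, 0 < a j) (hA : 0 < A) :
    ∃ B : ℝ, 0 < B ∧ ∀ (q : ℕ) [NeZero q], 1 < q →
      (∀ χ : DirichletCharacter ℂ q, dirichletRH χ) →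
      ∀ y : ℝ, 2 ≤ y →
      ∀ t : Fin (2 * k) → ℝ, (∀ j, |t j| ≤ (q : ℝ) ^ A) →
      ∑ χ ∈ Finset.univ.filter (fun χ : DirichletCharacter ℂ q => χ.IsPrimitive),
        ∏ j, ‖
          (DirichletCharacter.LFunction χ (1 / 2 + 1 / Real.log y + (t j) * Complex.I))‖ ^ (a j)
      ≤ (Nat.totient q) * (min (Real.log y + 1) (Real.log q)) ^ B := by
  have : Nonempty (Fin (2 * k)) := ⟨⟨0, by omega⟩⟩
  obtain ⟨B, hB, hbound⟩ := stmt5_general hA.le (sum_pos (fun j _ => ha j) univ_nonempty)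
  exact ⟨B, hB, fun q _ hq hRH => hbound a (fun j => (ha j).le) rfl q hq fun χ _ => hRH χ⟩
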